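/- arXiv:1711.06912 — 6 statements merged into one kernel-verified Lean document; each statement's English description precedes it below -/
import Mathlib

section
/- Let c > 0, let N ∈ ℕ, let T be a stopping time of the filtration (F_t) with T ≤ N almost surely, and let θ̂_T be any F_T-measurable [0,1]-valued random variable. Then c·E[T] + P(|θ̂_T − θ| > h) ≥ E[c·T + 𝒞_T(S_T)]. Moreover, equality holds when on each event {T = t, S_t = s} the estimator θ̂_T equals a maximizer over a ∈ [0,1] of ∫_{max(a−h,0)}^{min(a+h,1)} π_t(θ|s) dθ (the Bayes mid-point estimator). -/
open MeasureTheory Set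


/-- `m_t(s) = ∫_0^1 θ^s (1-θ)^(t-s) π(θ) dθ`. -/
noncomputable def margLik (π : ℝ → ℝ) (t s : ℕ) : ℝ :=
  ∫ θ in Ioc (0:ℝ) 1, θ ^ s * (1 - θ) ^ (t - s) * π θ

/-- Posterior density `π_t(θ|s)`. -/
noncomputable def postDens (π : ℝ → ℝ) (t s : ℕ) (θ : ℝ) : ℝ :=
  θ ^ s * (1 - θ) ^ (t - s) * π θ / margLik π t s

/-- Posterior coverage of the interval `[a-h, a+h]` cropped to `[0,1]`. -/
noncomputable def covFn (h : ℝ) (π : ℝ → ℝ) (t s : ℕ) (a : ℝ) : ℝ :=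
  ∫ θ in Ioc (max (a - h) 0) (min (a + h) 1), postDens π t s θ

/-- Optimal conditional complementary coverage probability `𝒞_t(s)`. -/
noncomputable def Copt (h : ℝ) (π : ℝ → ℝ) (t s : ℕ) : ℝ :=
  1 - sSup (covFn h π t s '' Icc 0 1)

/-- Predictive probability `g_{t+1}(s) = m_{t+1}(s+1)/m_t(s)`. -/
noncomputable def gpred (π : ℝ → ℝ) (t s : ℕ) : ℝ :=
  margLik π (t + 1) (s + 1) / margLik π t s

/-- Number of successes among the trials `x`. -/
def cnt {N : ℕ} (x : Fin N → Bool) : ℕ :=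
  (Finset.univ.filter (fun i : Fin N => x i)).card

/-- The joint (semi-Bayesian) law of `(θ, X₁, …, X_N)`: `θ` has density `π`
on `[0,1]` and, conditionally on `θ`, the `Xᵢ` are i.i.d. Bernoulli(θ). -/
noncomputable def jointP (π : ℝ → ℝ) (N : ℕ) : Measure (ℝ × (Fin N → Bool)) :=
  ∑ x : Fin N → Bool,
    Measure.map (fun θ => (θ, x))
      ((volume.restrict (Ioc (0:ℝ) 1)).withDensity
        (fun θ => ENNReal.ofReal (θ ^ cnt x * (1 - θ) ^ (N - cnt x) * π θ)))

/-- Number of successes among the first `t` observations. -/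
def St (N : ℕ) (t : ℕ) (ω : ℝ × (Fin N → Bool)) : ℕ :=
  (Finset.univ.filter (fun i : Fin N => (i : ℕ) < t ∧ ω.2 i)).card

/-- The filtration generated by the first `t` observations. -/
def Ft (N : ℕ) (t : ℕ) : MeasurableSpace (ℝ × (Fin N → Bool)) :=
  MeasurableSpace.comap
    (fun ω : ℝ × (Fin N → Bool) => fun i : Fin N => if (i : ℕ) < t then ω.2 i else false) ⊤


def msk {N : ℕ} (t : ℕ) (x : Fin N → Bool) : Fin N → Bool :=
  fun i => if (i : ℕ) < t then x i else false

lemma prod_lik {N : ℕ} (x : Fin N → Bool) (θ : ℝ) :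
    θ ^ cnt x * (1 - θ) ^ (N - cnt x) = ∏ i, (if x i then θ else 1 - θ) := by
  rw [Finset.prod_ite, Finset.prod_const, Finset.prod_const]
  have h := Finset.card_filter_add_card_filter_not (s := (Finset.univ : Finset (Fin N)))
    (fun i => x i = true)
  rw [Finset.card_univ, Fintype.card_fin] at h
  have : N - cnt x = (Finset.univ.filter (fun i : Fin N => ¬ (x i = true))).card := by
    unfold cnt; omega
  rw [this]; rfl

lemma fiber_lik {N : ℕ} (t : ℕ) (ht : t ≤ N) (x0 : Fin N → Bool) (z θ : ℝ) :
    ∑ x ∈ Finset.univ.filter (fun x : Fin N → Bool => msk t x = msk t x0),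
      θ ^ cnt x * (1 - θ) ^ (N - cnt x) =
    θ ^ St N t (z, x0) * (1 - θ) ^ (t - St N t (z, x0)) := by
  have h1 : Finset.univ.filter (fun x : Fin N → Bool => msk t x = msk t x0) =
      Fintype.piFinset (fun i : Fin N => if (i : ℕ) < t then ({x0 i} : Finset Bool)
        else Finset.univ) := by
    ext x
    simp only [Finset.mem_filter, Finset.mem_univ, true_and, Fintype.mem_piFinset, funext_iff, msk]
    refine forall_congr' fun i => ?_
    split_ifs <;> simp
  rw [h1, Finset.sum_congr rfl (fun x _ => prod_lik x θ),
    ← Finset.prod_univ_sum _ (fun _ (b : Bool) => if b then θ else 1 - θ)]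
  have h2 : ∀ i : Fin N, (∑ j ∈ (if (i : ℕ) < t then ({x0 i} : Finset Bool)
        else Finset.univ), (if j then θ else 1 - θ)) =
      if (i : ℕ) < t then (if x0 i then θ else 1 - θ) else 1 := by
    intro i
    split_ifs <;> simp_all
  rw [Finset.prod_congr rfl (fun i _ => h2 i), ← Finset.prod_filter, Finset.prod_ite,
    Finset.prod_const, Finset.prod_const, Finset.filter_filter, Finset.filter_filter]
  have h3 : (Finset.univ.filter (fun i : Fin N => (i : ℕ) < t)).card = t := by
    rw [Fin.card_filter_val_lt]; omega
  have h := Finset.card_filter_add_card_filter_not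
    (s := (Finset.univ.filter (fun i : Fin N => (i : ℕ) < t))) (fun i => x0 i = true)
  rw [h3, Finset.filter_filter, Finset.filter_filter] at h
  have : t - St N t (z, x0) =
    (Finset.univ.filter (fun i : Fin N => (i : ℕ) < t ∧ ¬ (x0 i = true))).card := by
    unfold St; simp only; omega
  rw [this]; rfl

lemma pi_int (π : ℝ → ℝ) (hπ1 : (∫ θ in (0:ℝ)..1, π θ) = 1) :
    IntegrableOn π (Ioc (0:ℝ) 1) := by
  by_contra hc
  rw [intervalIntegral.integral_of_le zero_le_one, integral_undef hc] at hπ1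
  exact zero_ne_one hπ1

lemma lik_int (π : ℝ → ℝ) (hπmeas : Measurable π) (hπ0 : ∀ θ, 0 ≤ π θ)
    (hπ1 : (∫ θ in (0:ℝ)..1, π θ) = 1) (s k : ℕ) :
    IntegrableOn (fun θ => θ ^ s * (1 - θ) ^ k * π θ) (Ioc (0:ℝ) 1) := by
  refine Integrable.mono' (pi_int π hπ1) (by fun_prop) ?_
  filter_upwards [ae_restrict_mem measurableSet_Ioc] with θ hθ
  have h1 : 0 ≤ θ := hθ.1.le
  have h2 : 0 ≤ 1 - θ := by linarith [hθ.2]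
  have h3 : θ ^ s ≤ 1 := pow_le_one₀ h1 hθ.2
  have h4 : (1 - θ) ^ k ≤ 1 := pow_le_one₀ h2 (by linarith)
  have h5 := hπ0 θ
  rw [Real.norm_of_nonneg (by positivity)]
  exact mul_le_of_le_one_left h5 (mul_le_one₀ h3 (by positivity) h4)

lemma lik_nonneg (π : ℝ → ℝ) (hπ0 : ∀ θ, 0 ≤ π θ) (s k : ℕ) :
    ∀ θ ∈ Ioc (0:ℝ) 1, 0 ≤ θ ^ s * (1 - θ) ^ k * π θ := by
  intro θ hθ
  have h1 : 0 ≤ θ := hθ.1.le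
  have h2 : 0 ≤ 1 - θ := by linarith [hθ.2]
  have h5 := hπ0 θ
  positivity

lemma margLik_pos (π : ℝ → ℝ) (hπmeas : Measurable π) (hπ0 : ∀ θ, 0 ≤ π θ)
    (hπ1 : (∫ θ in (0:ℝ)..1, π θ) = 1) (t s : ℕ) : 0 < margLik π t s := by
  have hnn : 0 ≤ᵐ[volume.restrict (Ioc (0:ℝ) 1)]
      (fun θ => θ ^ s * (1 - θ) ^ (t - s) * π θ) := by
    filter_upwards [ae_restrict_mem measurableSet_Ioc] with θ hθ using lik_nonneg π hπ0 _ _ θ hθ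
  refine lt_of_le_of_ne (integral_nonneg_of_ae hnn) (fun h0 => ?_)
  have h := (setIntegral_eq_zero_iff_of_nonneg_ae hnn (lik_int π hπmeas hπ0 hπ1 s (t - s))).1 h0.symm
  have hπz : π =ᵐ[volume.restrict (Ioc (0:ℝ) 1)] 0 := by
    have hne : ∀ᵐ θ ∂(volume.restrict (Ioc (0:ℝ) 1)), θ ≠ 1 :=
      ae_restrict_of_ae (Measure.ae_ne volume 1)
    filter_upwards [h, ae_restrict_mem measurableSet_Ioc, hne] with θ h1 h2 h3
    have h4 : 0 < θ := h2.1
    have h5 : 0 < 1 - θ := by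
      have := lt_of_le_of_ne h2.2 h3
      linarith
    simp only [Pi.zero_apply, mul_eq_zero] at h1
    rcases h1 with h1 | h1
    · rcases h1 with h1 | h1
      · exact absurd h1 (by positivity)
      · exact absurd h1 (by positivity)
    · exact h1
  rw [intervalIntegral.integral_of_le zero_le_one, integral_congr_ae hπz] at hπ1
  simp at hπ1

lemma covFn_mul (h : ℝ) (π : ℝ → ℝ) {t s : ℕ} (hm : 0 < margLik π t s) (a : ℝ) :
    margLik π t s * covFn h π t s a =
      ∫ θ in Ioc (max (a - h) 0) (min (a + h) 1), θ ^ s * (1 - θ) ^ (t - s) * π θ := by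
  unfold covFn postDens
  rw [integral_div, mul_div_cancel₀ _ hm.ne']

lemma bad_int (h : ℝ) (π : ℝ → ℝ) (hπmeas : Measurable π) (hπ0 : ∀ θ, 0 ≤ π θ)
    (hπ1 : (∫ θ in (0:ℝ)..1, π θ) = 1) (t s : ℕ) (a : ℝ) :
    ∫ θ in ({θ | |a - θ| > h} ∩ Ioc (0:ℝ) 1), θ ^ s * (1 - θ) ^ (t - s) * π θ =
      margLik π t s * (1 - covFn h π t s a) := by
  rw [mul_sub, covFn_mul h π (margLik_pos π hπmeas hπ0 hπ1 t s), mul_one]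
  unfold margLik
  rw [← setIntegral_sdiff measurableSet_Ioc (lik_int π hπmeas hπ0 hπ1 s (t - s))
    (Ioc_subset_Ioc (le_max_right _ _) (min_le_right _ _))]
  apply setIntegral_congr_set
  filter_upwards [Measure.ae_ne volume (a - h)] with θ hθ
  apply propext
  change (θ ∈ ({θ | |a - θ| > h} ∩ Ioc (0:ℝ) 1) ↔
    θ ∈ (Ioc (0:ℝ) 1 \ Ioc (max (a - h) 0) (min (a + h) 1)))
  simp only [mem_inter_iff, mem_setOf_eq, mem_diff, mem_Ioc, max_lt_iff, le_min_iff, gt_iff_lt,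
    lt_abs]
  constructor
  · rintro ⟨h1, h2⟩
    refine ⟨h2, fun h3 => ?_⟩
    rcases h1 with h1 | h1 <;> linarith [h3.1.1, h3.2.1]
  · rintro ⟨h2, h3⟩
    refine ⟨?_, h2⟩
    by_contra h4
    push Not at h4
    exact h3 ⟨⟨lt_of_le_of_ne (by linarith [h4.1]) (Ne.symm hθ), h2.1⟩, by linarith [h4.2], h2.2⟩

lemma covFn_le_one (h : ℝ) (π : ℝ → ℝ) (hπmeas : Measurable π) (hπ0 : ∀ θ, 0 ≤ π θ)
    (hπ1 : (∫ θ in (0:ℝ)..1, π θ) = 1) (t s : ℕ) (a : ℝ) : covFn h π t s a ≤ 1 := by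
  have hm := margLik_pos π hπmeas hπ0 hπ1 t s
  have h1 := bad_int h π hπmeas hπ0 hπ1 t s a
  have h2 : 0 ≤ ∫ θ in ({θ | |a - θ| > h} ∩ Ioc (0:ℝ) 1), θ ^ s * (1 - θ) ^ (t - s) * π θ := by
    apply setIntegral_nonneg
    · exact (measurableSet_lt (by fun_prop) (by fun_prop)).inter measurableSet_Ioc
    · exact fun θ hθ => lik_nonneg π hπ0 _ _ θ hθ.2
  rw [h1] at h2
  have := nonneg_of_mul_nonneg_right h2 hm
  linarith

/-- The sub-measure for each `x`. -/
noncomputable def nux (π : ℝ → ℝ) {N : ℕ} (x : Fin N → Bool) : Measure ℝ :=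
  (volume.restrict (Ioc (0:ℝ) 1)).withDensity
        (fun θ => ENNReal.ofReal (θ ^ cnt x * (1 - θ) ^ (N - cnt x) * π θ))

lemma nux_apply (π : ℝ → ℝ) (hπmeas : Measurable π) (hπ0 : ∀ θ, 0 ≤ π θ)
    (hπ1 : (∫ θ in (0:ℝ)..1, π θ) = 1) {N : ℕ} (x : Fin N → Bool) (A : Set ℝ)
    (hA : MeasurableSet A) :
    nux π x A = ENNReal.ofReal (∫ θ in A ∩ Ioc (0:ℝ) 1,
      θ ^ cnt x * (1 - θ) ^ (N - cnt x) * π θ) := by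
  unfold nux
  rw [withDensity_apply _ hA, Measure.restrict_restrict hA, ofReal_integral_eq_lintegral_ofReal]
  · exact (lik_int π hπmeas hπ0 hπ1 _ _).mono_set inter_subset_right
  · filter_upwards [ae_restrict_mem (hA.inter measurableSet_Ioc)] with θ hθ using
      lik_nonneg π hπ0 _ _ θ hθ.2

lemma nux_univ (π : ℝ → ℝ) (hπmeas : Measurable π) (hπ0 : ∀ θ, 0 ≤ π θ)
    (hπ1 : (∫ θ in (0:ℝ)..1, π θ) = 1) {N : ℕ} (x : Fin N → Bool) :
    nux π x univ = ENNReal.ofReal (margLik π N (cnt x)) := by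
  rw [nux_apply π hπmeas hπ0 hπ1 x _ MeasurableSet.univ, univ_inter]; rfl

lemma jointP_eq (π : ℝ → ℝ) (N : ℕ) :
    jointP π N = ∑ x : Fin N → Bool, Measure.map (fun θ => (θ, x)) (nux π x) := rfl

lemma nux_fin (π : ℝ → ℝ) (hπmeas : Measurable π) (hπ0 : ∀ θ, 0 ≤ π θ)
    (hπ1 : (∫ θ in (0:ℝ)..1, π θ) = 1) {N : ℕ} (x : Fin N → Bool) : IsFiniteMeasure (nux π x) :=
  ⟨by rw [nux_univ π hπmeas hπ0 hπ1]; exact ENNReal.ofReal_lt_top⟩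

lemma integral_snd (π : ℝ → ℝ) (hπmeas : Measurable π) (hπ0 : ∀ θ, 0 ≤ π θ)
    (hπ1 : (∫ θ in (0:ℝ)..1, π θ) = 1) {N : ℕ} (g : (Fin N → Bool) → ℝ) :
    ∫ ω, g ω.2 ∂(jointP π N) = ∑ x, margLik π N (cnt x) * g x := by
  have hg : Measurable (fun ω : ℝ × (Fin N → Bool) => g ω.2) :=
    (measurable_of_countable g).comp measurable_snd
  rw [jointP_eq, integral_finsetSum_measure]
  · refine Finset.sum_congr rfl fun x _ => ?_
    rw [integral_map (by fun_prop) hg.aestronglyMeasurable]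
    simp only [integral_const, smul_eq_mul, Measure.real]
    rw [nux_univ π hπmeas hπ0 hπ1,
      ENNReal.toReal_ofReal (margLik_pos π hπmeas hπ0 hπ1 _ _).le]
  · intro x _
    have := nux_fin π hπmeas hπ0 hπ1 x
    rw [integrable_map_measure hg.aestronglyMeasurable (by fun_prop)]
    exact integrable_const (g x)

lemma jointP_apply (π : ℝ → ℝ) (N : ℕ) (A : Set (ℝ × (Fin N → Bool))) (hA : MeasurableSet A) :
    jointP π N A = ∑ x : Fin N → Bool, nux π x {θ | (θ, x) ∈ A} := by
  rw [jointP_eq, Measure.finsetSum_apply]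
  refine Finset.sum_congr rfl fun x _ => ?_
  rw [Measure.map_apply (by fun_prop) hA]; rfl

lemma bad_prob (h : ℝ) (π : ℝ → ℝ) (hπmeas : Measurable π) (hπ0 : ∀ θ, 0 ≤ π θ)
    (hπ1 : (∫ θ in (0:ℝ)..1, π θ) = 1) {N : ℕ} (a : (Fin N → Bool) → ℝ) :
    ((jointP π N) {ω | |a ω.2 - ω.1| > h}).toReal =
      ∑ x, ∫ θ in ({θ | |a x - θ| > h} ∩ Ioc (0:ℝ) 1),
        θ ^ cnt x * (1 - θ) ^ (N - cnt x) * π θ := by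
  have ha : Measurable (fun ω : ℝ × (Fin N → Bool) => a ω.2) :=
    (measurable_of_countable a).comp measurable_snd
  have hms : ∀ x, MeasurableSet {θ : ℝ | |a x - θ| > h} := fun x =>
    measurableSet_lt (by fun_prop) (by fun_prop)
  rw [jointP_apply _ _ _ (measurableSet_lt (by fun_prop) (by fun_prop)), ENNReal.toReal_sum]
  · refine Finset.sum_congr rfl fun x _ => ?_
    simp only [mem_setOf_eq]
    rw [nux_apply π hπmeas hπ0 hπ1 x _ (hms x), ENNReal.toReal_ofReal]
    apply setIntegral_nonneg ((hms x).inter measurableSet_Ioc)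
    exact fun θ hθ => lik_nonneg π hπ0 _ _ θ hθ.2
  · intro x _
    have := nux_fin π hπmeas hπ0 hπ1 x
    exact measure_ne_top _ _

lemma fiber_sum (h : ℝ) (π : ℝ → ℝ) (hπmeas : Measurable π) (hπ0 : ∀ θ, 0 ≤ π θ)
    (hπ1 : (∫ θ in (0:ℝ)..1, π θ) = 1) {N : ℕ} (a : (Fin N → Bool) → ℝ)
    (τ : (Fin N → Bool) → ℕ) (hτN : ∀ x, τ x ≤ N)
    (hτ : ∀ x y, msk (τ x) x = msk (τ x) y → τ y = τ x ∧ a y = a x) :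
    ∑ x, ∫ θ in ({θ | |a x - θ| > h} ∩ Ioc (0:ℝ) 1),
        θ ^ cnt x * (1 - θ) ^ (N - cnt x) * π θ =
    ∑ x, margLik π N (cnt x) * (1 - covFn h π (τ x) (St N (τ x) (0, x)) (a x)) := by
  rw [← Finset.sum_fiberwise Finset.univ (fun x => msk (τ x) x),
    ← Finset.sum_fiberwise Finset.univ (fun x => msk (τ x) x) (fun x => margLik π N (cnt x) * _)]
  refine Finset.sum_congr rfl fun p _ => ?_
  by_cases hp : ∃ x0, msk (τ x0) x0 = p
  swap
  · have : Finset.univ.filter (fun x : Fin N → Bool => msk (τ x) x = p) = ∅ := by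
      ext x; simp; exact fun hx => hp ⟨x, hx⟩
    rw [this]; simp
  obtain ⟨x0, rfl⟩ := hp
  have mm : ∀ x : Fin N → Bool, ∀ t, msk t (msk t x) = msk t x := by
    intro x t; ext i; simp only [msk]; split_ifs <;> rfl
  have key : ∀ x, msk (τ x) x = msk (τ x0) x0 ↔ msk (τ x0) x = msk (τ x0) x0 := by
    intro x
    constructor
    · intro hx
      have h1 := (hτ x (msk (τ x) x) (mm _ _).symm).1
      have h2 := (hτ x0 (msk (τ x0) x0) (mm _ _).symm).1
      rw [hx, h2] at h1
      rwa [← h1] at hx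
    · intro hx
      rw [(hτ x0 x hx.symm).1, hx]
  have hF : Finset.univ.filter (fun x : Fin N → Bool => msk (τ x) x = msk (τ x0) x0) =
      Finset.univ.filter (fun x : Fin N → Bool => msk (τ x0) x = msk (τ x0) x0) :=
    Finset.filter_congr fun x _ => key x
  rw [hF]
  set F := Finset.univ.filter (fun x : Fin N → Bool => msk (τ x0) x = msk (τ x0) x0) with hFdef
  have hx : ∀ x ∈ F, τ x = τ x0 ∧ a x = a x0 ∧ St N (τ x0) (0, x) = St N (τ x0) (0, x0) := by
    intro x hx
    have hx' : msk (τ x0) x = msk (τ x0) x0 := (Finset.mem_filter.1 hx).2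
    refine ⟨(hτ x0 x hx'.symm).1, (hτ x0 x hx'.symm).2, ?_⟩
    unfold St
    congr 1
    apply Finset.filter_congr
    intro i _
    have := congrFun hx' i
    simp only [msk] at this
    constructor
    · rintro ⟨h1, h2⟩
      simp_all
    · rintro ⟨h1, h2⟩
      simp_all
  set s := St N (τ x0) (0, x0) with hs
  have hsum : ∀ θ, ∑ x ∈ F, θ ^ cnt x * (1 - θ) ^ (N - cnt x) * π θ =
      θ ^ s * (1 - θ) ^ (τ x0 - s) * π θ := by
    intro θ
    rw [← Finset.sum_mul, fiber_lik (τ x0) (hτN x0) x0 0 θ]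
  have hI : ∀ A : Set ℝ, A ⊆ Ioc 0 1 → ∑ x ∈ F, ∫ θ in A, θ ^ cnt x * (1 - θ) ^ (N - cnt x) * π θ =
      ∫ θ in A, θ ^ s * (1 - θ) ^ (τ x0 - s) * π θ := by
    intro A hA
    rw [← integral_finsetSum]
    · simp only [hsum]
    · exact fun x _ => (lik_int π hπmeas hπ0 hπ1 _ _).mono_set hA
  have hR : ∑ x ∈ F, margLik π N (cnt x) = margLik π (τ x0) s := hI _ subset_rfl
  calc _ = ∑ x ∈ F, ∫ θ in ({θ | |a x0 - θ| > h} ∩ Ioc (0:ℝ) 1),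
        θ ^ cnt x * (1 - θ) ^ (N - cnt x) * π θ :=
        Finset.sum_congr rfl fun x h' => by rw [(hx x h').2.1]
    _ = margLik π (τ x0) s * (1 - covFn h π (τ x0) s (a x0)) := by
        rw [hI _ inter_subset_right, bad_int h π hπmeas hπ0 hπ1]
    _ = ∑ x ∈ F, margLik π N (cnt x) * (1 - covFn h π (τ x0) s (a x0)) := by
        rw [← hR, Finset.sum_mul]
    _ = _ := Finset.sum_congr rfl fun x h' => by
        rw [(hx x h').1, (hx x h').2.1, (hx x h').2.2]

lemma Ft_mem {N t : ℕ} {A : Set (ℝ × (Fin N → Bool))} (hA : MeasurableSet[Ft N t] A)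
    {ω ω' : ℝ × (Fin N → Bool)} (hm : msk t ω.2 = msk t ω'.2) (h : ω ∈ A) : ω' ∈ A := by
  obtain ⟨B, -, rfl⟩ := hA
  change msk t ω'.2 ∈ B
  change msk t ω.2 ∈ B at h
  rwa [← hm]

/-- lower bound on the Lagrangian cost of any pair
`(T, θ̂_T)` of a bounded stopping time and an `F_T`-measurable mid-point
estimator, with equality when `θ̂_T` is the Bayes mid-point estimator. -/
theorem lagrangian_cost_lower_bound (h c : ℝ) (hh : 0 < h ∧ h < 1 / 2) (hc : 0 < c)
    (π : ℝ → ℝ) (hπmeas : Measurable π) (hπ0 : ∀ θ, 0 ≤ π θ)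
    (hπ1 : (∫ θ in (0:ℝ)..1, π θ) = 1) (N : ℕ)
    (T : ℝ × (Fin N → Bool) → ℕ)
    (hTN : ∀ᵐ ω ∂(jointP π N), T ω ≤ N)
    (hTstop : ∀ t : ℕ, MeasurableSet[Ft N t] {ω | T ω = t})
    (θhat : ℝ × (Fin N → Bool) → ℝ)
    (hθhat01 : ∀ ω, θhat ω ∈ Icc (0:ℝ) 1)
    (hθhatFT : ∀ t : ℕ, ∀ B : Set ℝ, MeasurableSet B →
      MeasurableSet[Ft N t] ({ω | θhat ω ∈ B} ∩ {ω | T ω = t})) :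
    (c * (∫ ω, (T ω : ℝ) ∂(jointP π N))
        + ((jointP π N) {ω | |θhat ω - ω.1| > h}).toReal
      ≥ ∫ ω, (c * (T ω : ℝ) + Copt h π (T ω) (St N (T ω) ω)) ∂(jointP π N)) ∧
    ((∀ ω, ∀ a ∈ Icc (0:ℝ) 1,
        covFn h π (T ω) (St N (T ω) ω) a ≤ covFn h π (T ω) (St N (T ω) ω) (θhat ω)) →
      c * (∫ ω, (T ω : ℝ) ∂(jointP π N))
          + ((jointP π N) {ω | |θhat ω - ω.1| > h}).toReal
        = ∫ ω, (c * (T ω : ℝ) + Copt h π (T ω) (St N (T ω) ω)) ∂(jointP π N)) := by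
  have hT : ∀ ω ω' : ℝ × (Fin N → Bool), msk (T ω) ω.2 = msk (T ω) ω'.2 →
      T ω' = T ω ∧ θhat ω' = θhat ω := by
    intro ω ω' hm
    have h1 := Ft_mem (hθhatFT (T ω) {θhat ω} (measurableSet_singleton _)) hm ⟨rfl, rfl⟩
    exact ⟨h1.2, h1.1⟩
  obtain ⟨τ, hτ⟩ : ∃ τ : (Fin N → Bool) → ℕ, T = fun ω => τ ω.2 :=
    ⟨fun x => T (0, x), funext fun ω => (hT (0, ω.2) ω rfl).1⟩
  obtain ⟨a, ha⟩ : ∃ a : (Fin N → Bool) → ℝ, θhat = fun ω => a ω.2 :=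
    ⟨fun x => θhat (0, x), funext fun ω => (hT (0, ω.2) ω rfl).2⟩
  subst hτ ha
  have hτa : ∀ x y, msk (τ x) x = msk (τ x) y → τ y = τ x ∧ a y = a x :=
    fun x y => hT (0, x) (0, y)
  have hmp := margLik_pos π hπmeas hπ0 hπ1
  have hτN : ∀ x, τ x ≤ N := by
    intro x
    by_contra hx
    rw [ae_iff, jointP_apply _ _ _ (by
      have : Measurable (fun ω : ℝ × (Fin N → Bool) => τ ω.2) :=
        (measurable_of_countable τ).comp measurable_snd
      exact (measurableSet_le this measurable_const).compl), Finset.sum_eq_zero_iff] at hTN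
    have h1 := hTN x (Finset.mem_univ _)
    have h2 : {θ : ℝ | (θ, x) ∈ {ω : ℝ × (Fin N → Bool) | ¬ τ ω.2 ≤ N}} = univ := by
      ext θ; simp only [mem_setOf_eq, mem_univ, iff_true]; exact hx
    rw [h2, nux_univ π hπmeas hπ0 hπ1, ENNReal.ofReal_eq_zero] at h1
    exact absurd h1 (not_le.2 (hmp _ _))
  have e1 : ∫ ω, ((τ ω.2 : ℕ) : ℝ) ∂(jointP π N) = _ :=
    integral_snd π hπmeas hπ0 hπ1 (fun x => (τ x : ℝ))
  have e2 : ∫ ω, (c * ((τ ω.2 : ℕ) : ℝ) + Copt h π (τ ω.2) (St N (τ ω.2) ω)) ∂(jointP π N) = _ :=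
    integral_snd π hπmeas hπ0 hπ1
      (fun x => c * (τ x : ℝ) + Copt h π (τ x) (St N (τ x) (0, x)))
  have e3 := bad_prob h π hπmeas hπ0 hπ1 a
  rw [fiber_sum h π hπmeas hπ0 hπ1 a τ hτN hτa] at e3
  simp only [e1, e2, e3]
  rw [Finset.mul_sum, ← Finset.sum_add_distrib]
  have ha01 : ∀ x, a x ∈ Icc (0:ℝ) 1 := fun x => hθhat01 (0, x)
  constructor
  · apply Finset.sum_le_sum
    intro x _
    have h1 : covFn h π (τ x) (St N (τ x) (0, x)) (a x) ≤
        sSup (covFn h π (τ x) (St N (τ x) (0, x)) '' Icc 0 1) :=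
      le_csSup ⟨1, by rintro _ ⟨b, -, rfl⟩; exact covFn_le_one h π hπmeas hπ0 hπ1 _ _ _⟩
        ⟨_, ha01 x, rfl⟩
    have h2 := mul_le_mul_of_nonneg_left h1 (hmp N (cnt x)).le
    unfold Copt
    linarith
  · intro hmax
    apply Finset.sum_congr rfl
    intro x _
    have h1 : sSup (covFn h π (τ x) (St N (τ x) (0, x)) '' Icc 0 1) =
        covFn h π (τ x) (St N (τ x) (0, x)) (a x) := by
      apply IsGreatest.csSup_eq
      refine ⟨⟨_, ha01 x, rfl⟩, ?_⟩
      rintro _ ⟨b, hb, rfl⟩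
      exact hmax (0, x) b hb
    unfold Copt
    rw [h1]
    ring
end

section
/- For all integers 0 ≤ s ≤ t, the optimal complementary coverage probabilities form a supermartingale with respect to one more observation: m_t(s)·𝒞_t(s) ≥ m_{t+1}(s+1)·𝒞_{t+1}(s+1) + m_{t+1}(s)·𝒞_{t+1}(s); equivalently, 𝒞_t(s) ≥ g_{t+1}(s)·𝒞_{t+1}(s+1) + (1 − g_{t+1}(s))·𝒞_{t+1}(s). -/
open MeasureTheory Set


/-- Auxiliary backward recursion: `Vaux k s = V_{N-k}(s)`. -/
noncomputable def Vaux (h : ℝ) (π : ℝ → ℝ) (c : ℝ) (N : ℕ) : ℕ → ℕ → ℝ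
  | 0, s => Copt h π N s
  | k + 1, s =>
      min (Copt h π (N - (k + 1)) s)
        (c + gpred π (N - (k + 1)) s * Vaux h π c N k (s + 1)
           + (1 - gpred π (N - (k + 1)) s) * Vaux h π c N k s)

/-- Optimal residual cost `V_t(s)` for horizon `N` and sampling cost `c`. -/
noncomputable def Vopt (h : ℝ) (π : ℝ → ℝ) (c : ℝ) (N t s : ℕ) : ℝ :=
  Vaux h π c N (N - t) s


theorem aux_int (π : ℝ → ℝ) (t s : ℕ) (hm : 0 < margLik π t s) :
    IntegrableOn (fun θ : ℝ => θ ^ s * (1 - θ) ^ (t - s) * π θ) (Ioc 0 1) := by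
  by_contra hc
  have : margLik π t s = 0 := integral_undef hc
  linarith

theorem aux_cov (h : ℝ) (π : ℝ → ℝ) (t s : ℕ) (a : ℝ) (hm : 0 < margLik π t s) :
    margLik π t s * covFn h π t s a
      = ∫ θ in Ioc (max (a - h) 0) (min (a + h) 1), θ ^ s * (1 - θ) ^ (t - s) * π θ := by
  unfold covFn postDens
  rw [integral_div]
  field_simp

theorem aux_sub (h a : ℝ) : Ioc (max (a - h) 0) (min (a + h) 1) ⊆ Ioc (0:ℝ) 1 :=
  Ioc_subset_Ioc (le_max_right _ _) (min_le_right _ _)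

theorem aux_split (π : ℝ → ℝ) (t s : ℕ) (hst : s ≤ t) (S : Set ℝ) (hS : S ⊆ Ioc (0:ℝ) 1)
    (hm1 : 0 < margLik π (t + 1) (s + 1)) (hm2 : 0 < margLik π (t + 1) s) :
    (∫ θ in S, θ ^ s * (1 - θ) ^ (t - s) * π θ)
      = (∫ θ in S, θ ^ (s + 1) * (1 - θ) ^ (t + 1 - (s + 1)) * π θ)
        + ∫ θ in S, θ ^ s * (1 - θ) ^ (t + 1 - s) * π θ := by
  rw [← integral_add ((aux_int π _ _ hm1).mono_set hS) ((aux_int π _ _ hm2).mono_set hS)]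
  congr 1
  funext θ
  rw [Nat.add_sub_add_right, Nat.succ_sub hst]
  simp only [Nat.succ_eq_add_one, pow_succ]
  ring

theorem aux_bdd (h : ℝ) (π : ℝ → ℝ) (hπ0 : ∀ θ, 0 ≤ π θ) (t s : ℕ) (hm : 0 < margLik π t s) :
    BddAbove (covFn h π t s '' Icc 0 1) := by
  refine ⟨1, ?_⟩
  rintro _ ⟨a, -, rfl⟩
  have h1 := aux_cov h π t s a hm
  have h2 : (∫ θ in Ioc (max (a - h) 0) (min (a + h) 1), θ ^ s * (1 - θ) ^ (t - s) * π θ)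
      ≤ margLik π t s := by
    refine setIntegral_mono_set (aux_int π t s hm) ?_ (aux_sub h a).eventuallyLE
    filter_upwards [ae_restrict_mem measurableSet_Ioc] with θ hθ
    exact mul_nonneg (mul_nonneg (pow_nonneg hθ.1.le _)
      (pow_nonneg (sub_nonneg.2 hθ.2) _)) (hπ0 θ)
  rw [← h1] at h2
  exact le_of_mul_le_mul_left (by linarith) hm

/-- the optimal complementary coverage probabilities form a
supermartingale with respect to one more observation. -/
theorem Copt_supermartingale (h : ℝ) (hh : 0 < h ∧ h < 1 / 2)
    (π : ℝ → ℝ) (hπ0 : ∀ θ, 0 ≤ π θ) (hπ1 : (∫ θ in (0:ℝ)..1, π θ) = 1)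
    (hm : ∀ t s : ℕ, 0 < margLik π t s) :
    ∀ t s : ℕ, s ≤ t →
      (margLik π (t + 1) (s + 1) * Copt h π (t + 1) (s + 1)
          + margLik π (t + 1) s * Copt h π (t + 1) s
        ≤ margLik π t s * Copt h π t s) ∧
      (gpred π t s * Copt h π (t + 1) (s + 1)
          + (1 - gpred π t s) * Copt h π (t + 1) s
        ≤ Copt h π t s) := by
  intro t s hst
  have m0 := hm t s
  have m1 := hm (t + 1) (s + 1)
  have m2 := hm (t + 1) s
  have hM : margLik π t s = margLik π (t + 1) (s + 1) + margLik π (t + 1) s :=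
    aux_split π t s hst _ subset_rfl m1 m2
  have key : margLik π t s * sSup (covFn h π t s '' Icc 0 1)
      ≤ margLik π (t + 1) (s + 1) * sSup (covFn h π (t + 1) (s + 1) '' Icc 0 1)
        + margLik π (t + 1) s * sSup (covFn h π (t + 1) s '' Icc 0 1) := by
    rw [mul_comm, ← le_div_iff₀ m0]
    refine csSup_le ((nonempty_Icc.2 zero_le_one).image _) ?_
    rintro _ ⟨a, ha, rfl⟩
    rw [le_div_iff₀ m0, mul_comm, aux_cov h π t s a m0,
      aux_split π t s hst _ (aux_sub h a) m1 m2, ← aux_cov h π _ _ a m1, ← aux_cov h π _ _ a m2]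
    exact add_le_add
      (mul_le_mul_of_nonneg_left (le_csSup (aux_bdd h π hπ0 _ _ m1) ⟨a, ha, rfl⟩) m1.le)
      (mul_le_mul_of_nonneg_left (le_csSup (aux_bdd h π hπ0 _ _ m2) ⟨a, ha, rfl⟩) m2.le)
  have first : margLik π (t + 1) (s + 1) * Copt h π (t + 1) (s + 1)
          + margLik π (t + 1) s * Copt h π (t + 1) s
        ≤ margLik π t s * Copt h π t s := by
    unfold Copt
    linarith
  refine ⟨first, ?_⟩
  have hg : margLik π t s * gpred π t s = margLik π (t + 1) (s + 1) := by
    unfold gpred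
    field_simp
  refine le_of_mul_le_mul_left ?_ m0
  refine le_trans (le_of_eq ?_) first
  have hg2 : margLik π t s * (1 - gpred π t s) = margLik π (t + 1) s := by linarith
  rw [mul_add, ← mul_assoc, ← mul_assoc, hg, hg2]
end

section
/- Let p, q > 0 and let X be a random variable with the Beta(p,q) distribution, whose mean is μ = p/(p+q). Then for every h > 0, P(|X − μ| > h) ≤ 2·e^{−2h²(p+q+1)}. -/
open MeasureTheory Set

/-- The Beta function `B(p,q) = ∫_0^1 x^(p-1) (1-x)^(q-1) dx`. -/
noncomputable def betaFn (p q : ℝ) : ℝ :=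
  ∫ x in Ioc (0:ℝ) 1, x ^ (p - 1) * (1 - x) ^ (q - 1)

/-- The Beta(p,q) distribution on `[0,1]`. -/
noncomputable def betaMeasure (p q : ℝ) : Measure ℝ :=
  (volume.restrict (Ioc (0:ℝ) 1)).withDensity
    (fun x => ENNReal.ofReal (x ^ (p - 1) * (1 - x) ^ (q - 1) / betaFn p q))

lemma upper_tail {Ω : Type*} [MeasurableSpace Ω]
    (P : Measure Ω) [IsProbabilityMeasure P] (p q : ℝ) (hp : 0 < p) (hq : 0 < q)
    (X : Ω → ℝ) (hX : Measurable X) (hb : ∀ᵐ ω ∂P, X ω ∈ Icc (0:ℝ) 1)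
    (hid : ∀ t : ℝ, ∫ ω, (p * (1 - X ω) - q * X ω + t * (X ω * (1 - X ω))) * Real.exp (t * X ω) ∂P
      = 0)
    (h : ℝ) (hh : 0 < h) :
    P.real {ω | p / (p + q) + h ≤ X ω} ≤ Real.exp (-2 * h ^ 2 * (p + q + 1)) := by
  have hint : ∀ t : ℝ, Integrable (fun ω ↦ Real.exp (t * X ω)) P := fun t ↦
    ProbabilityTheory.integrable_exp_mul_of_mem_Icc hX.aemeasurable hb
  have hU : ∀ t : ℝ, t ∈ interior (ProbabilityTheory.integrableExpSet X P) := by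
    intro t
    have : ProbabilityTheory.integrableExpSet X P = univ := by
      ext t; simpa [ProbabilityTheory.integrableExpSet] using hint t
    simp [this]
  set M : ℕ → ℝ → ℝ := fun n t ↦ ∫ ω, X ω ^ n * Real.exp (t * X ω) ∂P with hM
  have hMd : ∀ n t, HasDerivAt (M n) (M (n+1) t) t := fun n t ↦
    ProbabilityTheory.hasDerivAt_integral_pow_mul_exp_real (hU t) n
  have hMi : ∀ n t, Integrable (fun ω ↦ X ω ^ n * Real.exp (t * X ω)) P := by
    intro n t
    refine (hint t).bdd_mul (c := 1) (by fun_prop) ?_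
    filter_upwards [hb] with ω hω
    rw [Real.norm_eq_abs, abs_of_nonneg (pow_nonneg hω.1 _)]
    exact pow_le_one₀ hω.1 hω.2
  have hM0 : ∀ t, M 0 t = ProbabilityTheory.mgf X P t := by
    intro t; simp [hM, ProbabilityTheory.mgf]
  have hMpos : ∀ t, 0 < M 0 t := fun t ↦ by
    rw [hM0]; exact ProbabilityTheory.mgf_pos (hint t)
  have hode : ∀ t, p * M 0 t - (p + q) * M 1 t + t * (M 1 t - M 2 t) = 0 := by
    intro t
    rw [← hid t]
    simp only [hM]
    rw [← integral_const_mul, ← integral_const_mul, ← integral_sub (hMi 1 t) (hMi 2 t),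
      ← integral_const_mul, ← integral_sub ((hMi 0 t).const_mul _) ((hMi 1 t).const_mul _),
      ← integral_add (by exact ((hMi 0 t).const_mul _).sub ((hMi 1 t).const_mul _))
        (by exact ((hMi 1 t).sub (hMi 2 t)).const_mul _)]
    congr 1
    ext ω
    ring
  obtain ⟨s, hs⟩ : ∃ s, s = p + q := ⟨_, rfl⟩
  have hs0 : 0 < s := by rw [hs]; positivity
  rw [← hs]
  simp only [← hs] at hode
  have hψd : ∀ t, HasDerivAt (fun t ↦ M 1 t / M 0 t - p / s - t / (4 * (s + 1)))
      ((M 2 t * M 0 t - M 1 t * M 1 t) / (M 0 t) ^ 2 - 1 / (4 * (s + 1))) t := by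
    intro t
    exact (((hMd 1 t).div (hMd 0 t) (hMpos t).ne').sub_const _).sub
      ((hasDerivAt_id t).div_const _)
  have hkey : ∀ t, 0 < t → M 1 t / M 0 t - p / s - t / (4 * (s + 1)) ≤ 0 := by
    intro t ht
    have hanti : AntitoneOn (fun t : ℝ ↦ t ^ s * (M 1 t / M 0 t - p / s - t / (4 * (s + 1))))
        (Ici 0) := by
      have hder : ∀ x : ℝ, 0 < x → HasDerivAt
          (fun t : ℝ ↦ t ^ s * (M 1 t / M 0 t - p / s - t / (4 * (s + 1))))
          (s * x ^ (s - 1) * (M 1 x / M 0 x - p / s - x / (4 * (s + 1))) +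
            x ^ s * ((M 2 x * M 0 x - M 1 x * M 1 x) / (M 0 x) ^ 2 - 1 / (4 * (s + 1)))) x := by
        intro x hx
        exact (Real.hasDerivAt_rpow_const (Or.inl hx.ne')).mul (hψd x)
      apply antitoneOn_of_deriv_nonpos (convex_Ici 0)
      · apply ContinuousOn.mul
        · exact (Real.continuous_rpow_const hs0.le).continuousOn
        · exact fun x _ ↦ (hψd x).continuousAt.continuousWithinAt
      · intro x hx
        rw [interior_Ici] at hx
        exact (hder x hx).differentiableAt.differentiableWithinAt
      · intro x hx
        rw [interior_Ici] at hx
        have hx : 0 < x := hx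
        rw [(hder x hx).deriv]
        have e1 : x ^ s = x ^ (s - 1) * x := by
          rw [Real.rpow_sub_one hx.ne']; field_simp
        have hm := hMpos x
        have ho := hode x
        obtain ⟨y, hy⟩ : ∃ y, y = M 1 x / M 0 x := ⟨_, rfl⟩
        have hy1 : M 1 x = y * M 0 x := by rw [hy]; field_simp
        obtain ⟨z, hz⟩ : ∃ z, z = M 2 x / M 0 x := ⟨_, rfl⟩
        have hz1 : M 2 x = z * M 0 x := by rw [hz]; field_simp
        have ho2 : p - s * y + x * (y - z) = 0 := by
          have : M 0 x * (p - s * y + x * (y - z)) = 0 := by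
            rw [hy1, hz1] at ho; linarith
          rcases mul_eq_zero.1 this with h | h
          · exact absurd h hm.ne'
          · exact h
        have e2 : (M 2 x * M 0 x - M 1 x * M 1 x) / (M 0 x) ^ 2 = z - y ^ 2 := by
          rw [hy1, hz1]; field_simp
        rw [e2, ← hy, e1]
        have e3 : s * x ^ (s - 1) * (y - p / s - x / (4 * (s + 1))) +
            x ^ (s - 1) * x * (z - y ^ 2 - 1 / (4 * (s + 1)))
            = x ^ (s - 1) * (x * (y * (1 - y) - 1 / 4)) := by
          have : s * (y - p / s - x / (4 * (s + 1))) + x * (z - y ^ 2 - 1 / (4 * (s + 1)))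
              = x * (y * (1 - y) - 1 / 4) := by
            have a1 : s * (y - p / s - x / (4 * (s + 1))) + x * (z - y ^ 2 - 1 / (4 * (s + 1)))
              = s * y - p - x / 4 + x * (z - y ^ 2) := by
              field_simp; ring
            rw [a1]; linarith
          rw [← this]; ring
        rw [e3]
        refine mul_nonpos_of_nonneg_of_nonpos (Real.rpow_nonneg hx.le _)
          (mul_nonpos_of_nonneg_of_nonpos hx.le ?_)
        nlinarith [sq_nonneg (y - 1 / 2)]
    have := hanti (mem_Ici.2 le_rfl) (mem_Ici.2 ht.le) ht.le
    simp only [Real.zero_rpow hs0.ne', zero_mul] at this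
    by_contra hc
    push Not at hc
    have := mul_pos (Real.rpow_pos_of_pos ht s) hc
    linarith
  have hmgf : ∀ t, 0 ≤ t → Real.log (M 0 t) ≤ p / s * t + t ^ 2 / (8 * (s + 1)) := by
    intro t ht
    have hder : ∀ x : ℝ, HasDerivAt
        (fun t : ℝ ↦ Real.log (M 0 t) - p / s * t - t ^ 2 / (8 * (s + 1)))
        (M 1 x / M 0 x - p / s - x / (4 * (s + 1))) x := by
      intro x
      have := (((hMd 0 x).log (hMpos x).ne').sub ((hasDerivAt_id x).const_mul (p / s))).sub
        (((hasDerivAt_id x).pow 2).div_const (8 * (s + 1)))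
      convert! this using 1
      simp
      field_simp
      ring
    have hanti : AntitoneOn (fun t : ℝ ↦ Real.log (M 0 t) - p / s * t - t ^ 2 / (8 * (s + 1)))
        (Ici 0) := by
      apply antitoneOn_of_deriv_nonpos (convex_Ici 0)
      · exact fun x _ ↦ (hder x).continuousAt.continuousWithinAt
      · exact fun x _ ↦ (hder x).differentiableAt.differentiableWithinAt
      · intro x hx
        rw [interior_Ici] at hx
        rw [(hder x).deriv]
        exact hkey x hx
    have := hanti (mem_Ici.2 le_rfl) (mem_Ici.2 ht) ht
    have h0 : M 0 0 = 1 := by simp [hM]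
    simp only [h0] at this
    simp at this
    linarith
  have ht : 0 ≤ 4 * (s + 1) * h := by positivity
  refine (ProbabilityTheory.measure_ge_le_exp_cgf (p / s + h) ht (hint _)).trans ?_
  rw [Real.exp_le_exp, ProbabilityTheory.cgf, ← hM0]
  have := hmgf _ ht
  have e : (4 * (s + 1) * h) ^ 2 / (8 * (s + 1)) = 2 * h ^ 2 * (s + 1) := by
    field_simp; ring
  rw [e] at this
  linarith

lemma beta_ident (p q : ℝ) (hp : 0 < p) (hq : 0 < q) [IsProbabilityMeasure (betaMeasure p q)]
    (t : ℝ) :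
    ∫ x, (p * (1 - x) - q * x + t * (x * (1 - x))) * Real.exp (t * x) ∂(betaMeasure p q) = 0 := by
  have hB : 0 ≤ betaFn p q := by
    refine setIntegral_nonneg measurableSet_Ioc fun x hx ↦ ?_
    exact mul_nonneg (Real.rpow_nonneg hx.1.le _) (Real.rpow_nonneg (by linarith [hx.2]) _)
  obtain ⟨B, hBe⟩ : ∃ B, B = betaFn p q := ⟨_, rfl⟩
  rw [← hBe] at hB
  have hmeas : Measurable (fun x : ℝ ↦ ENNReal.ofReal (x ^ (p - 1) * (1 - x) ^ (q - 1) / B)) := by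
    fun_prop
  have hν : betaMeasure p q = (volume.restrict (Ioc (0:ℝ) 1)).withDensity
    (fun x => ENNReal.ofReal (x ^ (p - 1) * (1 - x) ^ (q - 1) / B)) := by
    rw [betaMeasure, hBe]
  have hlt : ∀ᵐ x ∂(volume.restrict (Ioc (0:ℝ) 1)),
      ENNReal.ofReal (x ^ (p - 1) * (1 - x) ^ (q - 1) / B) < ⊤ := by simp
  have hae : ∀ᵐ x ∂(volume.restrict (Ioc (0:ℝ) 1)),
      (ENNReal.ofReal (x ^ (p - 1) * (1 - x) ^ (q - 1) / B)).toReal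
        = x ^ (p - 1) * (1 - x) ^ (q - 1) / B := by
    refine ae_restrict_of_forall_mem measurableSet_Ioc fun x hx ↦ ?_
    rw [ENNReal.toReal_ofReal]
    exact div_nonneg (mul_nonneg (Real.rpow_nonneg hx.1.le _)
      (Real.rpow_nonneg (by linarith [hx.2]) _)) hB
  have hsupp : ∀ᵐ x ∂(betaMeasure p q), x ∈ Icc (0:ℝ) 1 := by
    rw [hν]
    refine (withDensity_absolutelyContinuous _ _).ae_le ?_
    exact ae_restrict_of_forall_mem measurableSet_Ioc fun x hx ↦ ⟨hx.1.le, hx.2⟩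
  set G : ℝ → ℝ := fun x ↦ (p * (1 - x) - q * x + t * (x * (1 - x))) * Real.exp (t * x) with hG
  have hGc : Continuous G := by fun_prop
  have hGi : Integrable G (betaMeasure p q) := by
    obtain ⟨C, hC⟩ := (isCompact_Icc (a := (0:ℝ)) (b := 1)).exists_bound_of_continuousOn
      hGc.continuousOn
    refine Integrable.of_bound hGc.aestronglyMeasurable C ?_
    filter_upwards [hsupp] with x hx using hC x hx
  have hcong : (fun x ↦ (ENNReal.ofReal (x ^ (p - 1) * (1 - x) ^ (q - 1) / B)).toReal • G x)
      =ᵐ[volume.restrict (Ioc (0:ℝ) 1)]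
      fun x ↦ x ^ (p - 1) * (1 - x) ^ (q - 1) / B * G x := by
    filter_upwards [hae] with x hx
    rw [hx, smul_eq_mul]
  have hFi : Integrable (fun x ↦ x ^ (p - 1) * (1 - x) ^ (q - 1) / B * G x)
      (volume.restrict (Ioc (0:ℝ) 1)) := by
    rw [hν, integrable_withDensity_iff_integrable_smul' hmeas hlt] at hGi
    exact hGi.congr hcong
  rw [hν, integral_withDensity_eq_integral_toReal_smul hmeas hlt, integral_congr_ae hcong,
    ← intervalIntegral.integral_of_le zero_le_one]
  rw [intervalIntegral.integral_eq_sub_of_hasDerivAt_of_le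
    (f := fun x ↦ x ^ p * (1 - x) ^ q * Real.exp (t * x) / B) zero_le_one]
  · simp [Real.zero_rpow hp.ne', Real.zero_rpow hq.ne']
  · have h1 : Continuous fun x : ℝ ↦ x ^ p := Real.continuous_rpow_const hp.le
    have h2 : Continuous fun x : ℝ ↦ (1 - x) ^ q :=
      (Real.continuous_rpow_const hq.le).comp (continuous_const.sub continuous_id)
    have h3 : Continuous fun x : ℝ ↦ Real.exp (t * x) := by fun_prop
    exact (((h1.mul h2).mul h3).div_const B).continuousOn
  · intro x hx
    have hx0 : 0 < x := hx.1
    have hx1 : 0 < 1 - x := by linarith [hx.2]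
    have d1 : HasDerivAt (fun x : ℝ ↦ x ^ p) (p * x ^ (p - 1)) x :=
      Real.hasDerivAt_rpow_const (Or.inl hx0.ne')
    have d2 : HasDerivAt (fun x : ℝ ↦ (1 - x) ^ q) (-1 * q * (1 - x) ^ (q - 1)) x :=
      ((hasDerivAt_id x).const_sub 1).rpow_const (Or.inl hx1.ne')
    have d3 : HasDerivAt (fun x : ℝ ↦ Real.exp (t * x)) (Real.exp (t * x) * (t * 1)) x :=
      ((hasDerivAt_id x).const_mul t).exp
    have := ((d1.mul d2).mul d3).div_const B
    convert! this using 1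
    have e1 : x ^ p = x ^ (p - 1) * x := by
      rw [Real.rpow_sub_one hx0.ne']; field_simp
    have e2 : (1 - x) ^ q = (1 - x) ^ (q - 1) * (1 - x) := by
      rw [Real.rpow_sub_one hx1.ne']; field_simp
    simp only [hG, Pi.mul_apply, e1, e2]
    ring
  · rw [intervalIntegrable_iff_integrableOn_Ioc_of_le zero_le_one]
    exact hFi

/-- sub-Gaussian concentration of a Beta(p,q) random variable
around its mean `p/(p+q)`. -/
theorem beta_concentration {Ω : Type*} [MeasurableSpace Ω]
    (P : Measure Ω) [IsProbabilityMeasure P] (p q : ℝ) (hp : 0 < p) (hq : 0 < q)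
    (X : Ω → ℝ) (hX : Measurable X) (hlaw : P.map X = betaMeasure p q)
    (h : ℝ) (hh : 0 < h) :
    (P {ω | |X ω - p / (p + q)| > h}).toReal
      ≤ 2 * Real.exp (-2 * h ^ 2 * (p + q + 1)) := by
  have hprob : IsProbabilityMeasure (betaMeasure p q) := by
    rw [← hlaw]; exact Measure.isProbabilityMeasure_map hX.aemeasurable
  have hsupp : ∀ᵐ x ∂(betaMeasure p q), x ∈ Icc (0:ℝ) 1 := by
    rw [betaMeasure]
    refine (withDensity_absolutelyContinuous _ _).ae_le ?_
    exact ae_restrict_of_forall_mem measurableSet_Ioc fun x hx ↦ ⟨hx.1.le, hx.2⟩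
  have hb : ∀ᵐ ω ∂P, X ω ∈ Icc (0:ℝ) 1 := by
    rw [← hlaw] at hsupp
    exact ae_of_ae_map hX.aemeasurable hsupp
  have hid : ∀ t : ℝ, ∫ ω, (p * (1 - X ω) - q * X ω + t * (X ω * (1 - X ω)))
      * Real.exp (t * X ω) ∂P = 0 := by
    intro t
    have := beta_ident p q hp hq t
    rw [← hlaw, integral_map hX.aemeasurable
      (Continuous.aestronglyMeasurable (by fun_prop))] at this
    exact this
  have h1 := upper_tail P p q hp hq X hX hb hid h hh
  have h2 := upper_tail P q p hq hp (fun ω ↦ 1 - X ω) (by fun_prop)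
    (by
      filter_upwards [hb] with ω hω
      exact ⟨by linarith [hω.2], by linarith [hω.1]⟩)
    (by
      intro t
      have e : ∀ ω, (q * (1 - (1 - X ω)) - p * (1 - X ω) + t * ((1 - X ω) * (1 - (1 - X ω)))) *
          Real.exp (t * (1 - X ω)) = (-Real.exp t) *
          ((p * (1 - X ω) - q * X ω + (-t) * (X ω * (1 - X ω))) * Real.exp (-t * X ω)) := by
        intro ω
        have : Real.exp (t * (1 - X ω)) = Real.exp t * Real.exp (-t * X ω) := by
          rw [← Real.exp_add]; congr 1; ring
        rw [this]; ring
      simp_rw [e]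
      rw [integral_const_mul, hid, mul_zero]) h hh
  rw [add_comm q p] at h2
  have hsub : {ω | |X ω - p / (p + q)| > h} ⊆
      {ω | p / (p + q) + h ≤ X ω} ∪ {ω | q / (p + q) + h ≤ 1 - X ω} := by
    intro ω hω
    have hω : h < |X ω - p / (p + q)| := hω
    have e : q / (p + q) = 1 - p / (p + q) := by field_simp; ring
    rcases lt_abs.1 hω with h3 | h3
    · left
      show p / (p + q) + h ≤ X ω
      linarith
    · right
      show q / (p + q) + h ≤ 1 - X ω
      rw [e]; linarith
  calc (P {ω | |X ω - p / (p + q)| > h}).toReal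
      = P.real {ω | |X ω - p / (p + q)| > h} := rfl
    _ ≤ P.real ({ω | p / (p + q) + h ≤ X ω} ∪ {ω | q / (p + q) + h ≤ 1 - X ω}) :=
        measureReal_mono hsub
    _ ≤ _ := measureReal_union_le _ _
    _ ≤ 2 * Real.exp (-2 * h ^ 2 * (p + q + 1)) := by linarith
end

section
/- Let a > 0 and take the prior π(θ) = θ^{a−1}(1−θ)^{a−1}/B(a,a) (the Beta(a,a) density). Then for all integers 0 ≤ s ≤ t, the optimal conditional complementary coverage probability satisfies 𝒞_t(s) ≤ 2·e^{−2h²(t+2a+1)}. -/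
open MeasureTheory Set


open ProbabilityTheory in
lemma aux_mgf {Ω : Type*} [MeasurableSpace Ω] (μ : Measure Ω) [IsProbabilityMeasure μ]
    (X : Ω → ℝ) (hX : AEMeasurable X μ) (hb : ∀ᵐ ω ∂μ, X ω ∈ Icc (0:ℝ) 1)
    (α β : ℝ) (hα : 0 < α) (hβ : 0 < β)
    (hC : ∀ l : ℝ, ∫ ω, (α * (1 - X ω) - β * X ω + l * (X ω * (1 - X ω))) *
      Real.exp (l * X ω) ∂μ = 0) (l : ℝ) (hl : 0 ≤ l) :
    mgf X μ l ≤ Real.exp (l * (α / (α + β)) + l ^ 2 / (8 * (α + β + 1))) := by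
  have hi (u : ℝ) : Integrable (fun ω ↦ Real.exp (u * X ω)) μ := integrable_exp_mul_of_mem_Icc hX hb
  have hs (u : ℝ) : u ∈ interior (integrableExpSet X μ) := by simp [hi, integrableExpSet]
  set Z1 : ℝ → ℝ := fun u => ∫ ω, X ω ^ 1 * Real.exp (u * X ω) ∂μ with hZ1
  set Z2 : ℝ → ℝ := fun u => ∫ ω, X ω ^ 2 * Real.exp (u * X ω) ∂μ with hZ2
  have i1 (u : ℝ) : Integrable (fun ω ↦ X ω ^ 1 * Real.exp (u * X ω)) μ :=
    integrable_pow_mul_exp_of_mem_interior_integrableExpSet (hs u) 1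
  have i2 (u : ℝ) : Integrable (fun ω ↦ X ω ^ 2 * Real.exp (u * X ω)) μ :=
    integrable_pow_mul_exp_of_mem_interior_integrableExpSet (hs u) 2
  have d0 (u : ℝ) : HasDerivAt (mgf X μ) (Z1 u) u := by
    simpa [hZ1] using hasDerivAt_mgf (hs u)
  have d1 (u : ℝ) : HasDerivAt Z1 (Z2 u) u := hasDerivAt_integral_pow_mul_exp_real (hs u) 1
  have hpos (u : ℝ) : 0 < mgf X μ u := mgf_pos (hi u)
  have hid (u : ℝ) : α * mgf X μ u - (α + β) * Z1 u + u * (Z1 u - Z2 u) = 0 := by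
    rw [← hC u, mgf, hZ1, hZ2]
    simp only
    rw [← integral_sub (i1 u) (i2 u), ← integral_const_mul, ← integral_const_mul,
      ← integral_const_mul, ← integral_sub ((hi u).const_mul _) ((i1 u).const_mul _)]
    refine (integral_add (((hi u).const_mul _).sub ((i1 u).const_mul _))
        (((i1 u).sub (i2 u)).const_mul _)).symm.trans ?_
    refine integral_congr_ae (Filter.Eventually.of_forall fun ω => ?_)
    simp only [Pi.sub_apply]
    ring
  set n := α + β with hn
  have hn0 : 0 < n := by positivity
  set g : ℝ → ℝ := fun u => Z1 u / mgf X μ u - α / n - u / (4 * (n + 1)) with hg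
  have dg (u : ℝ) : HasDerivAt g
      ((Z2 u * mgf X μ u - Z1 u * Z1 u) / mgf X μ u ^ 2 - 1 / (4 * (n + 1))) u :=
    (((d1 u).div (d0 u) (hpos u).ne').sub_const _).sub ((hasDerivAt_id u).div_const _)
  have key (u : ℝ) : n * g u + u * ((Z2 u * mgf X μ u - Z1 u * Z1 u) / mgf X μ u ^ 2
      - 1 / (4 * (n + 1))) = u * (Z1 u / mgf X μ u - (Z1 u / mgf X μ u) ^ 2 - 1 / 4) := by
    have h1 := (hpos u).ne'
    have h2 : u * Z2 u = α * mgf X μ u - n * Z1 u + u * Z1 u := by linarith [hid u]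
    have h3 : u * ((Z2 u * mgf X μ u - Z1 u * Z1 u) / mgf X μ u ^ 2) =
        (u * Z2 u) / mgf X μ u - u * (Z1 u / mgf X μ u) ^ 2 := by
      field_simp
    rw [mul_sub u, h3, h2]
    simp only [hg]
    field_simp
    ring
  have hgn : ∀ u, 0 < u → g u ≤ 0 := by
    intro u hu
    have dP : ∀ v, 0 < v → HasDerivAt (fun v => v ^ n * g v)
        (n * v ^ (n - 1) * g v + v ^ n * ((Z2 v * mgf X μ v - Z1 v * Z1 v) / mgf X μ v ^ 2
          - 1 / (4 * (n + 1)))) v := by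
      intro v hv
      exact (Real.hasDerivAt_rpow_const (Or.inl hv.ne')).mul (dg v)
    have hanti : AntitoneOn (fun v => v ^ n * g v) (Ici (0:ℝ)) := by
      apply antitoneOn_of_deriv_nonpos (convex_Ici 0)
      · refine ContinuousOn.mul ?_ ?_
        · exact (Real.continuous_rpow_const hn0.le).continuousOn
        · exact fun v _ => (dg v).continuousAt.continuousWithinAt
      · intro v hv
        rw [interior_Ici] at hv
        exact (dP v hv).differentiableAt.differentiableWithinAt
      · intro v hv
        rw [interior_Ici] at hv
        have hv : 0 < v := hv
        rw [(dP v hv).deriv]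
        have e : v ^ n = v ^ (n - 1) * v := by
          rw [Real.rpow_sub_one hv.ne']; field_simp
        rw [e]
        have : n * v ^ (n - 1) * g v + v ^ (n - 1) * v *
          ((Z2 v * mgf X μ v - Z1 v * Z1 v) / mgf X μ v ^ 2 - 1 / (4 * (n + 1))) =
          v ^ (n - 1) * (n * g v + v * ((Z2 v * mgf X μ v - Z1 v * Z1 v) / mgf X μ v ^ 2
          - 1 / (4 * (n + 1)))) := by ring
        rw [this, key]
        have h1 := Real.rpow_pos_of_pos hv (n - 1)
        refine mul_nonpos_of_nonneg_of_nonpos h1.le (mul_nonpos_of_nonneg_of_nonpos hv.le ?_)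
        nlinarith [sq_nonneg (Z1 v / mgf X μ v - 1 / 2)]
    have h := hanti (mem_Ici.2 le_rfl) (mem_Ici.2 hu.le) hu.le
    simp only [Real.zero_rpow hn0.ne', zero_mul] at h
    have h1 := Real.rpow_pos_of_pos hu n
    by_contra hc
    push Not at hc
    linarith [mul_pos h1 hc]
  have dF (u : ℝ) : HasDerivAt (fun u => Real.log (mgf X μ u) - u * (α / n) -
      u ^ 2 / (8 * (n + 1))) (g u) u := by
    have := (((d0 u).log (hpos u).ne').sub ((hasDerivAt_id u).mul_const (α / n))).sub
      (((hasDerivAt_id u).pow 2).div_const (8 * (n + 1)))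
    refine this.congr_deriv ?_
    simp only [hg, id_eq]
    field_simp
    ring
  have hanti : AntitoneOn (fun u => Real.log (mgf X μ u) - u * (α / n) -
      u ^ 2 / (8 * (n + 1))) (Ici (0:ℝ)) := by
    apply antitoneOn_of_deriv_nonpos (convex_Ici 0)
    · exact fun v _ => (dF v).continuousAt.continuousWithinAt
    · exact fun v _ => (dF v).differentiableAt.differentiableWithinAt
    · intro v hv
      rw [interior_Ici] at hv
      rw [(dF v).deriv]
      exact hgn v hv
  have h := hanti (mem_Ici.2 le_rfl) (mem_Ici.2 hl) hl
  simp at h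
  rw [← Real.exp_log (hpos l)]
  apply Real.exp_le_exp.2
  linarith

open ProbabilityTheory in
lemma aux_tail {Ω : Type*} [MeasurableSpace Ω] (μ : Measure Ω) [IsProbabilityMeasure μ]
    (X : Ω → ℝ) (hX : AEMeasurable X μ) (hb : ∀ᵐ ω ∂μ, X ω ∈ Icc (0:ℝ) 1)
    (α β : ℝ) (hα : 0 < α) (hβ : 0 < β)
    (hC : ∀ l : ℝ, ∫ ω, (α * (1 - X ω) - β * X ω + l * (X ω * (1 - X ω))) *
      Real.exp (l * X ω) ∂μ = 0) (h : ℝ) (hh : 0 ≤ h) :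
    μ.real {ω | α / (α + β) + h ≤ X ω} ≤ Real.exp (-2 * h ^ 2 * (α + β + 1)) := by
  have hl : 0 ≤ 4 * (α + β + 1) * h := by positivity
  refine (measure_ge_le_exp_mul_mgf _ hl (integrable_exp_mul_of_mem_Icc hX hb)).trans ?_
  refine (mul_le_mul_of_nonneg_left (aux_mgf μ X hX hb α β hα hβ hC _ hl)
    (Real.exp_pos _).le).trans ?_
  rw [← Real.exp_add]
  apply Real.exp_le_exp.2
  apply le_of_eq
  field_simp
  ring

lemma pdf_eq_zero (α β : ℝ) {x : ℝ} (hx : x ∉ Ioo (0:ℝ) 1) :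
    ProbabilityTheory.betaPDFReal α β x = 0 := by
  rw [ProbabilityTheory.betaPDFReal, if_neg (show ¬ (0 < x ∧ x < 1) from hx)]

lemma pdf_nonneg (α β : ℝ) (hα : 0 < α) (hβ : 0 < β) (x : ℝ) :
    0 ≤ ProbabilityTheory.betaPDFReal α β x := by
  by_cases hx : x ∈ Ioo (0:ℝ) 1
  · exact (ProbabilityTheory.betaPDFReal_pos hx.1 hx.2 hα hβ).le
  · rw [pdf_eq_zero α β hx]

lemma pdf_integrable (α β : ℝ) (hα : 0 < α) (hβ : 0 < β) :
    Integrable (ProbabilityTheory.betaPDFReal α β) := by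
  refine ⟨(ProbabilityTheory.measurable_betaPDFReal α β).aestronglyMeasurable, ?_⟩
  rw [hasFiniteIntegral_iff_ofReal (Filter.Eventually.of_forall (pdf_nonneg α β hα hβ))]
  have := ProbabilityTheory.lintegral_betaPDF_eq_one hα hβ
  simp only [ProbabilityTheory.betaPDF] at this
  rw [this]
  simp

lemma pdf_integral (α β : ℝ) (hα : 0 < α) (hβ : 0 < β) :
    ∫ x, ProbabilityTheory.betaPDFReal α β x = 1 := by
  rw [integral_eq_lintegral_of_nonneg_ae
    (Filter.Eventually.of_forall (pdf_nonneg α β hα hβ))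
    (ProbabilityTheory.measurable_betaPDFReal α β).aestronglyMeasurable]
  have := ProbabilityTheory.lintegral_betaPDF_eq_one hα hβ
  simp only [ProbabilityTheory.betaPDF] at this
  rw [this]
  simp

lemma betaFn_eq (α β : ℝ) (hα : 0 < α) (hβ : 0 < β) :
    betaFn α β = ProbabilityTheory.beta α β := by
  have h := pdf_integral α β hα hβ
  have hB := ProbabilityTheory.beta_pos hα hβ
  rw [← setIntegral_eq_integral_of_forall_compl_eq_zero (s := Ioo (0:ℝ) 1)
    (fun x hx => pdf_eq_zero α β hx)] at h
  have e : ∫ x in Ioo (0:ℝ) 1, ProbabilityTheory.betaPDFReal α β x =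
      ∫ x in Ioo (0:ℝ) 1, (1 / ProbabilityTheory.beta α β) * (x ^ (α - 1) * (1 - x) ^ (β - 1)) := by
    refine setIntegral_congr_fun measurableSet_Ioo fun x hx => ?_
    simp only [ProbabilityTheory.betaPDFReal]
    rw [if_pos (show 0 < x ∧ x < 1 from hx), mul_assoc]
  rw [e, integral_const_mul, ← integral_Ioc_eq_integral_Ioo] at h
  rw [betaFn]
  field_simp at h
  exact h

lemma beta_int (α β : ℝ) (hα : 0 < α) (hβ : 0 < β) (f : ℝ → ℝ) :
    ∫ x, f x ∂(ProbabilityTheory.betaMeasure α β) =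
      ∫ x, ProbabilityTheory.betaPDFReal α β x * f x := by
  rw [ProbabilityTheory.betaMeasure, integral_withDensity_eq_integral_toReal_smul]
  · simp only [ProbabilityTheory.betaPDF, smul_eq_mul]
    congr 1
    ext x
    rw [ENNReal.toReal_ofReal (pdf_nonneg α β hα hβ x)]
  · exact (ProbabilityTheory.measurable_betaPDFReal α β).ennreal_ofReal
  · exact Filter.Eventually.of_forall fun x => by simp [ProbabilityTheory.betaPDF]

lemma beta_identity (α β : ℝ) (hα : 0 < α) (hβ : 0 < β) (l : ℝ) :
    ∫ x, (α * (1 - x) - β * x + l * (x * (1 - x))) * Real.exp (l * x)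
      ∂(ProbabilityTheory.betaMeasure α β) = 0 := by
  rw [beta_int α β hα hβ]
  rw [← setIntegral_eq_integral_of_forall_compl_eq_zero (s := Ioc (0:ℝ) 1)
    (fun x hx => by
      rw [pdf_eq_zero α β (fun h => hx ⟨h.1, h.2.le⟩), zero_mul]),
    ← intervalIntegral.integral_of_le zero_le_one]
  rw [intervalIntegral.integral_eq_sub_of_hasDerivAt_of_le (zero_le_one)
    (f := fun x => 1 / ProbabilityTheory.beta α β * (x ^ α * (1 - x) ^ β * Real.exp (l * x)))]
  · simp [Real.zero_rpow hα.ne', Real.zero_rpow hβ.ne']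
  · refine Continuous.continuousOn ?_
    refine continuous_const.mul ((((Real.continuous_rpow_const hα.le)).mul
      ((Real.continuous_rpow_const hβ.le).comp (by fun_prop : Continuous fun x : ℝ => 1 - x))).mul
      (by fun_prop))
  · intro x hx
    have h1 : x ≠ 0 := hx.1.ne'
    have h2 : (1 - x) ≠ 0 := by linarith [hx.2]
    have d1 := Real.hasDerivAt_rpow_const (x := x) (p := α) (Or.inl h1)
    have d2 := ((hasDerivAt_id x).const_sub 1).rpow_const (p := β) (Or.inl h2)
    have d3 := ((hasDerivAt_id x).const_mul l).exp
    have := ((d1.mul d2).mul d3).const_mul (1 / ProbabilityTheory.beta α β)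
    refine this.congr_deriv ?_
    have e1 : x ^ α = x ^ (α - 1) * x := by rw [Real.rpow_sub_one h1]; field_simp
    have e2 : (1 - x) ^ β = (1 - x) ^ (β - 1) * (1 - x) := by
      rw [Real.rpow_sub_one h2]; field_simp
    simp only [ProbabilityTheory.betaPDFReal, id, Pi.mul_apply]
    rw [if_pos (show 0 < x ∧ x < 1 from hx), e1, e2]
    ring
  · rw [intervalIntegrable_iff_integrableOn_Icc_of_le zero_le_one]
    refine IntegrableOn.mul_continuousOn (pdf_integrable α β hα hβ).integrableOn ?_ isCompact_Icc
    fun_prop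

lemma beta_mem (α β : ℝ) :
    ∀ᵐ x ∂(ProbabilityTheory.betaMeasure α β), x ∈ Ioo (0:ℝ) 1 := by
  rw [ProbabilityTheory.betaMeasure, ae_withDensity_iff (f := ProbabilityTheory.betaPDF α β)
    (ProbabilityTheory.measurable_betaPDFReal α β).ennreal_ofReal]
  refine Filter.Eventually.of_forall fun x hx => ?_
  by_contra hc
  exact hx (by simp [ProbabilityTheory.betaPDF, pdf_eq_zero α β hc])

lemma beta_real (α β : ℝ) (hα : 0 < α) (hβ : 0 < β) (S : Set ℝ) (hS : MeasurableSet S) :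
    ∫ x in S, ProbabilityTheory.betaPDFReal α β x =
      (ProbabilityTheory.betaMeasure α β).real S := by
  have := ProbabilityTheory.isProbabilityMeasureBeta hα hβ
  rw [← integral_indicator_one hS, beta_int α β hα hβ, ← integral_indicator hS]
  congr 1
  ext x
  by_cases hx : x ∈ S <;> simp [hx]

lemma beta_cov (α β : ℝ) (hα : 0 < α) (hβ : 0 < β) (h : ℝ) (hh : 0 ≤ h) :
    1 - (ProbabilityTheory.betaMeasure α β).real
      (Ioc (max (α / (α + β) - h) 0) (min (α / (α + β) + h) 1)) ≤
      2 * Real.exp (-2 * h ^ 2 * (α + β + 1)) := by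
  have := ProbabilityTheory.isProbabilityMeasureBeta hα hβ
  set ν := ProbabilityTheory.betaMeasure α β
  have hm : ∀ᵐ x ∂ν, x ∈ Ioo (0:ℝ) 1 := beta_mem α β
  have t1 := aux_tail ν (fun x => x) aemeasurable_id
    (hm.mono fun x hx => ⟨hx.1.le, hx.2.le⟩) α β hα hβ (beta_identity α β hα hβ) h hh
  have t2 := aux_tail ν (fun x => 1 - x) (by fun_prop)
    (hm.mono fun x hx => ⟨by linarith [hx.2], by linarith [hx.1]⟩) β α hβ hα (by
      intro l
      have e := beta_identity α β hα hβ (-l)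
      have e2 : ∀ x : ℝ, (β * (1 - (1 - x)) - α * (1 - x) + l * ((1 - x) * (1 - (1 - x)))) *
          Real.exp (l * (1 - x)) = (-Real.exp l) * ((α * (1 - x) - β * x + -l * (x * (1 - x))) *
          Real.exp (-l * x)) := by
        intro x
        rw [show l * (1 - x) = l + -l * x by ring, Real.exp_add]
        ring
      simp_rw [e2]
      rw [integral_const_mul, e, mul_zero]) h hh
  rw [add_comm β α] at t2
  rw [← probReal_compl_eq_one_sub measurableSet_Ioc]
  have hsub : ν.real (Ioc (max (α / (α + β) - h) 0) (min (α / (α + β) + h) 1))ᶜ ≤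
      ν.real ({x | α / (α + β) + h ≤ x} ∪ {x | β / (α + β) + h ≤ 1 - x}) := by
    refine ENNReal.toReal_mono (measure_ne_top _ _) (measure_mono_ae ?_)
    filter_upwards [hm] with x hx hxc
    by_contra hc
    have hc : ¬ (α / (α + β) + h ≤ x ∨ β / (α + β) + h ≤ 1 - x) := hc
    push Not at hc
    have hs : α / (α + β) + β / (α + β) = 1 := by field_simp
    exact hxc ⟨max_lt (by linarith [hc.2]) hx.1, le_min hc.1.le hx.2.le⟩
  have := measureReal_union_le (μ := ν) {x | α / (α + β) + h ≤ x} {x | β / (α + β) + h ≤ 1 - x}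
  linarith

lemma post_eq (a : ℝ) (ha : 0 < a) (t s : ℕ) (hst : s ≤ t) :
    ∀ x ∈ Ioo (0:ℝ) 1,
      postDens (fun θ => θ ^ (a - 1) * (1 - θ) ^ (a - 1) / betaFn a a) t s x =
      ProbabilityTheory.betaPDFReal (a + s) (a + (t - s : ℕ)) x := by
  have hα : 0 < a + s := by positivity
  have hβ : 0 < a + (t - s : ℕ) := by positivity
  have hB : betaFn a a ≠ 0 := by
    rw [betaFn_eq a a ha ha]; exact (ProbabilityTheory.beta_pos ha ha).ne'
  have hE : ∀ x ∈ Ioo (0:ℝ) 1, x ^ s * (1 - x) ^ (t - s) *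
      (x ^ (a - 1) * (1 - x) ^ (a - 1) / betaFn a a) =
      (1 / betaFn a a) * (x ^ ((a + s) - 1) * (1 - x) ^ ((a + (t - s : ℕ)) - 1)) := by
    intro x hx
    have h2 : 0 < 1 - x := by linarith [hx.2]
    rw [show a + (s:ℝ) - 1 = (a - 1) + s by ring,
      show a + ((t - s : ℕ):ℝ) - 1 = (a - 1) + (t - s : ℕ) by ring,
      Real.rpow_add_natCast hx.1.ne', Real.rpow_add_natCast h2.ne']
    ring
  have hM : margLik (fun θ => θ ^ (a - 1) * (1 - θ) ^ (a - 1) / betaFn a a) t s =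
      (1 / betaFn a a) * ProbabilityTheory.beta (a + s) (a + (t - s : ℕ)) := by
    rw [← betaFn_eq _ _ hα hβ, margLik, betaFn.eq_1 (a + s), integral_Ioc_eq_integral_Ioo,
      integral_Ioc_eq_integral_Ioo (f := fun x : ℝ => x ^ ((a + s) - 1) * (1 - x) ^ ((a + (t - s : ℕ)) - 1)),
      ← integral_const_mul]
    exact setIntegral_congr_fun measurableSet_Ioo hE
  intro x hx
  have hb := (ProbabilityTheory.beta_pos hα hβ).ne'
  rw [postDens, hM, hE x hx, ProbabilityTheory.betaPDFReal,
    if_pos (show 0 < x ∧ x < 1 from hx)]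
  field_simp

lemma cov_eq (h a : ℝ) (ha : 0 < a) (t s : ℕ) (hst : s ≤ t) (c : ℝ) :
    covFn h (fun θ => θ ^ (a - 1) * (1 - θ) ^ (a - 1) / betaFn a a) t s c =
      (ProbabilityTheory.betaMeasure (a + s) (a + (t - s : ℕ))).real
        (Ioc (max (c - h) 0) (min (c + h) 1)) := by
  rw [← beta_real _ _ (by positivity) (by positivity) _ measurableSet_Ioc, covFn,
    integral_Ioc_eq_integral_Ioo, integral_Ioc_eq_integral_Ioo]
  refine setIntegral_congr_fun measurableSet_Ioo fun x hx => ?_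
  exact post_eq a ha t s hst x
    ⟨(le_max_right _ _).trans_lt hx.1, hx.2.trans_le (min_le_right _ _)⟩

/-- for the Beta(a,a) prior, the optimal conditional
complementary coverage probability decays exponentially in `t`. -/
theorem Copt_upper_bound_beta_prior (h : ℝ) (hh : 0 < h ∧ h < 1 / 2)
    (a : ℝ) (ha : 0 < a) :
    ∀ t s : ℕ, s ≤ t →
      Copt h (fun θ => θ ^ (a - 1) * (1 - θ) ^ (a - 1) / betaFn a a) t s
        ≤ 2 * Real.exp (-2 * h ^ 2 * ((t : ℝ) + 2 * a + 1)) := by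
  intro t s hst
  have hα : 0 < a + (s:ℝ) := by positivity
  have hβ : 0 < a + ((t - s : ℕ):ℝ) := by positivity
  have := ProbabilityTheory.isProbabilityMeasureBeta hα hβ
  have key := beta_cov _ _ hα hβ h hh.1.le
  rw [← cov_eq h a ha t s hst] at key
  have e : (a + (s:ℝ)) + (a + ((t - s : ℕ):ℝ)) + 1 = (t:ℝ) + 2 * a + 1 := by
    rw [Nat.cast_sub hst]; ring
  rw [e] at key
  refine le_trans ?_ key
  rw [Copt]
  apply sub_le_sub_left
  refine le_csSup ⟨1, ?_⟩ ⟨_, ⟨?_, ?_⟩, rfl⟩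
  · rintro _ ⟨c, -, rfl⟩
    rw [cov_eq h a ha t s hst]
    exact measureReal_le_one
  · positivity
  · rw [div_le_one (by positivity)]
    linarith
end

section
/- Suppose the horizon N satisfies 𝒞_N(s) ≤ c for all 0 ≤ s ≤ N, and let 0 ≤ t < N be such that 𝒞_t(s) > c·(N + 1 − t) for every 0 ≤ s ≤ t. Then V_t(s) < 𝒞_t(s) for every 0 ≤ s ≤ t; that is, the optimal stopping rule does not stop at time t for any value of the success count. -/
open MeasureTheory Set


theorem Vaux_le_aux (h : ℝ) (π : ℝ → ℝ)
    (hg : ∀ t s : ℕ, 0 ≤ gpred π t s ∧ gpred π t s ≤ 1)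
    (c : ℝ) (N : ℕ) (hN : ∀ s : ℕ, s ≤ N → Copt h π N s ≤ c) :
    ∀ k : ℕ, k ≤ N → ∀ s : ℕ, s ≤ N - k → Vaux h π c N k s ≤ c * ((k : ℝ) + 1) := by
  intro k
  induction k with
  | zero =>
    intro _ s hs
    simpa [Vaux] using hN s (by omega)
  | succ k ih =>
    intro hk s hs
    have h1 := ih (by omega) (s + 1) (by omega)
    have h2 := ih (by omega) s (by omega)
    obtain ⟨g0, g1⟩ := hg (N - (k + 1)) s
    have h3 := mul_le_mul_of_nonneg_left h1 g0
    have h4 := mul_le_mul_of_nonneg_left h2 (sub_nonneg.mpr g1)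
    rw [Vaux]
    refine (min_le_right _ _).trans ?_
    push_cast
    linarith

/-- if `𝒞_N(s) ≤ c` for all `s` and `𝒞_t(s) > c (N + 1 - t)`
for every `s ≤ t`, then the optimal rule does not stop at time `t`. -/
theorem no_stopping_before (h : ℝ) (hh : 0 < h ∧ h < 1 / 2)
    (π : ℝ → ℝ) (hπ0 : ∀ θ, 0 ≤ π θ) (hπ1 : (∫ θ in (0:ℝ)..1, π θ) = 1)
    (hm : ∀ t s : ℕ, 0 < margLik π t s)
    (hg : ∀ t s : ℕ, 0 ≤ gpred π t s ∧ gpred π t s ≤ 1)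
    (c : ℝ) (hc : 0 < c) (N : ℕ)
    (hN : ∀ s : ℕ, s ≤ N → Copt h π N s ≤ c)
    (t : ℕ) (ht : t < N)
    (hCt : ∀ s : ℕ, s ≤ t → c * ((N : ℝ) + 1 - t) < Copt h π t s) :
    ∀ s : ℕ, s ≤ t → Vopt h π c N t s < Copt h π t s := by
  intro s hs
  have h1 := Vaux_le_aux h π hg c N hN (N - t) (by omega) s (by omega)
  have h2 := hCt s hs
  rw [Nat.cast_sub ht.le] at h1
  unfold Vopt
  refine lt_of_le_of_lt h1 (lt_of_eq_of_lt ?_ h2)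
  ring
end

section
/- Let a > 0, take the prior to be the Beta(a,a) density, and set n_a = ⌊a⌋ and δ_a = a − ⌊a⌋ if a is not an integer, while n_a = a − 1 and δ_a = 1 if a is an integer. Then for every integer t ≥ 1 and every 0 ≤ s ≤ t, the optimal conditional complementary coverage probability satisfies 𝒞_t(s) ≥ 2·(0.25 − h²)^{δ_a}·(0.5 − h)^{t+2n_a} / ((t + 2n_a + 2δ_a)·Γ(δ_a)), where Γ is the Gamma function. -/
open MeasureTheory Set


/-- `n_a`: integer part `⌊a⌋` if `a` is not an integer, and `a - 1` if `a` is
an integer. -/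
noncomputable def nA (a : ℝ) : ℝ :=
  if (⌊a⌋ : ℝ) = a then a - 1 else (⌊a⌋ : ℝ)

/-- `δ_a`: fractional part `a - ⌊a⌋` if `a` is not an integer, and `1` if `a`
is an integer. -/
noncomputable def deltaA (a : ℝ) : ℝ :=
  if (⌊a⌋ : ℝ) = a then 1 else a - (⌊a⌋ : ℝ)

noncomputable def bF (p q x : ℝ) : ℝ := x ^ (p - 1) * (1 - x) ^ (q - 1)

lemma bF_int {p q : ℝ} (hp : 0 < p) (hq : 0 < q) : IntegrableOn (bF p q) (Ioc 0 1) := by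
  have h := Complex.betaIntegral_convergent (u := (p : ℂ)) (v := (q : ℂ)) (by simpa) (by simpa)
  rw [intervalIntegrable_iff_integrableOn_Ioc_of_le zero_le_one] at h
  have h2 := h.re
  refine (integrableOn_congr_fun ?_ measurableSet_Ioc).mp h2
  intro x hx
  simp only [bF]
  norm_cast
  rw [← Complex.ofReal_cpow hx.1.le, ← Complex.ofReal_cpow (by linarith [hx.2])]
  norm_cast

lemma bF_total {p q : ℝ} (hp : 0 < p) (hq : 0 < q) :
    ∫ x in (0:ℝ)..1, bF p q x = ProbabilityTheory.beta p q := by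
  rw [ProbabilityTheory.beta_eq_betaIntegralReal p q hp hq, Complex.betaIntegral,
    intervalIntegral.integral_of_le (by norm_num), intervalIntegral.integral_of_le (by norm_num),
    ← RCLike.re_to_complex, ← integral_re]
  · refine setIntegral_congr_fun measurableSet_Ioc fun x hx ↦ ?_
    simp only [bF]
    norm_cast
    rw [← Complex.ofReal_cpow hx.1.le, ← Complex.ofReal_cpow (by linarith [hx.2])]
    norm_cast
  · have h := Complex.betaIntegral_convergent (u := (p : ℂ)) (v := (q : ℂ)) (by simpa) (by simpa)
    rwa [intervalIntegrable_iff_integrableOn_Ioc_of_le zero_le_one] at h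

lemma bF_ii {p q : ℝ} (hp : 0 < p) (hq : 0 < q) {u v : ℝ} (hu : 0 ≤ u) (huv : u ≤ v)
    (hv : v ≤ 1) : IntervalIntegrable (bF p q) volume u v := by
  rw [intervalIntegrable_iff_integrableOn_Ioc_of_le huv]
  exact (bF_int hp hq).mono_set (Ioc_subset_Ioc hu hv)

lemma bF_nonneg (p q : ℝ) {x : ℝ} (h0 : 0 ≤ x) (h1 : x ≤ 1) : 0 ≤ bF p q x :=
  mul_nonneg (Real.rpow_nonneg h0 _) (Real.rpow_nonneg (by linarith) _)

lemma bF_shift (p q k : ℝ) {x : ℝ} (h0 : 0 < x) (h1 : x < 1) :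
    bF (p + k) (q - k) x = (x / (1 - x)) ^ k * bF p q x := by
  have h2 : 0 < 1 - x := by linarith
  unfold bF
  rw [Real.div_rpow h0.le h2.le, show p + k - 1 = (p - 1) + k by ring, Real.rpow_add h0,
    show q - k - 1 = (q - 1) - k by ring, Real.rpow_sub h2]
  have := (Real.rpow_pos_of_pos h2 k).ne'
  field_simp

lemma odds_mono {x y : ℝ} (h0 : 0 < x) (hxy : x ≤ y) (h1 : y < 1) :
    x / (1 - x) ≤ y / (1 - y) := by
  rw [div_le_div_iff₀ (by linarith) (by linarith)]
  nlinarith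

lemma mlr {p q k u : ℝ} (hp : 0 < p) (hk : 0 ≤ k) (hq : 0 < q - k) (hu0 : 0 < u) (hu1 : u < 1) :
    (∫ x in (0:ℝ)..u, bF (p + k) (q - k) x) * ∫ x in (0:ℝ)..1, bF p q x ≤
    (∫ x in (0:ℝ)..u, bF p q x) * ∫ x in (0:ℝ)..1, bF (p + k) (q - k) x := by
  have hq' : 0 < q := by linarith
  have hpk : 0 < p + k := by linarith
  rw [← intervalIntegral.integral_add_adjacent_intervals (bF_ii hp hq' le_rfl hu0.le hu1.le)
      (bF_ii hp hq' hu0.le hu1.le le_rfl),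
    ← intervalIntegral.integral_add_adjacent_intervals (bF_ii hpk hq le_rfl hu0.le hu1.le)
      (bF_ii hpk hq hu0.le hu1.le le_rfl)]
  set g := (u / (1 - u)) ^ k
  have hodds : 0 < u / (1 - u) := div_pos hu0 (by linarith)
  have h1 : (∫ x in (0:ℝ)..u, bF (p + k) (q - k) x) ≤ g * ∫ x in (0:ℝ)..u, bF p q x := by
    rw [← intervalIntegral.integral_const_mul]
    refine intervalIntegral.integral_mono_on_of_le_Ioo hu0.le (bF_ii hpk hq le_rfl hu0.le hu1.le)
      ((bF_ii hp hq' le_rfl hu0.le hu1.le).const_mul _) ?_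
    intro x hx
    rw [bF_shift p q k hx.1 (hx.2.trans hu1)]
    refine mul_le_mul_of_nonneg_right ?_ (bF_nonneg _ _ hx.1.le (hx.2.trans hu1).le)
    exact Real.rpow_le_rpow (div_nonneg hx.1.le (by linarith [hx.2]))
      (odds_mono hx.1 hx.2.le hu1) hk
  have h2 : g * (∫ x in u..1, bF p q x) ≤ ∫ x in u..1, bF (p + k) (q - k) x := by
    rw [← intervalIntegral.integral_const_mul]
    refine intervalIntegral.integral_mono_on_of_le_Ioo hu1.le
      ((bF_ii hp hq' hu0.le hu1.le le_rfl).const_mul _) (bF_ii hpk hq hu0.le hu1.le le_rfl) ?_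
    intro x hx
    rw [bF_shift p q k (hu0.trans hx.1) hx.2]
    refine mul_le_mul_of_nonneg_right ?_ (bF_nonneg _ _ (hu0.trans hx.1).le hx.2.le)
    exact Real.rpow_le_rpow hodds.le (odds_mono hu0 hx.1.le hx.2) hk
  have hA : 0 ≤ ∫ x in (0:ℝ)..u, bF p q x :=
    intervalIntegral.integral_nonneg hu0.le fun x hx => bF_nonneg _ _ hx.1 (hx.2.trans hu1.le)
  have hB : 0 ≤ ∫ x in u..1, bF p q x :=
    intervalIntegral.integral_nonneg hu1.le fun x hx => bF_nonneg _ _ (hu0.le.trans hx.1) hx.2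
  have h3 := mul_le_mul_of_nonneg_right h1 hB
  have h4 := mul_le_mul_of_nonneg_left h2 hA
  nlinarith

lemma gamma_bd {N d : ℝ} (hN : 1 ≤ N) (hd : 0 < d) (hd1 : d ≤ 1) :
    Real.Gamma (N - d + 1) ≤ N * Real.Gamma N := by
  have h := Real.convexOn_Gamma.2 (x := N) (y := N + 1) (mem_Ioi.2 (by linarith))
    (mem_Ioi.2 (by linarith)) hd.le (show 0 ≤ 1 - d by linarith) (by ring)
  simp only [smul_eq_mul] at h
  rw [show d * N + (1 - d) * (N + 1) = N - d + 1 by ring, Real.Gamma_add_one (s := N) (by linarith)] at h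
  have hG := Real.Gamma_pos_of_pos (show 0 < N by linarith)
  nlinarith [mul_nonneg (mul_nonneg hd.le hG.le) (show 0 ≤ N - 1 by linarith)]

/-- lower bound for the left tail -/
lemma tail {p q d u : ℝ} (hp : 0 < p) (hd : 0 < d) (hd1 : d ≤ 1) (hq : d ≤ q)
    (hN : 1 ≤ p + q) (hu0 : 0 ≤ u) (hu1 : u < 1) :
    u ^ (p + q - d) / ((p + q) * Real.Gamma d) * (∫ x in (0:ℝ)..1, bF p q x) ≤
      ∫ x in (0:ℝ)..u, bF p q x := by
  have hM : 0 < p + q - d := by linarith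
  rcases hu0.eq_or_lt with rfl | hu0
  · simp [Real.zero_rpow hM.ne']
  have h := mlr (p := p) (q := q) (k := q - d) hp (by linarith) (by linarith) hu0 hu1
  rw [show q - (q - d) = d by ring, show p + (q - d) = p + q - d by ring] at h
  rw [bF_total hM hd] at h
  have h1 : u ^ (p + q - d) / (p + q - d) ≤ ∫ x in (0:ℝ)..u, bF (p + q - d) d x := by
    have : u ^ (p + q - d) / (p + q - d) = ∫ x in (0:ℝ)..u, x ^ (p + q - d - 1) := by
      rw [integral_rpow (Or.inl (by linarith))]
      rw [sub_add_cancel, Real.zero_rpow hM.ne', sub_zero]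
    rw [this]
    refine intervalIntegral.integral_mono_on_of_le_Ioo hu0.le
      (intervalIntegral.intervalIntegrable_rpow' (by linarith))
      (bF_ii hM hd le_rfl hu0.le hu1.le) ?_
    intro x hx
    unfold bF
    refine le_mul_of_one_le_right (Real.rpow_nonneg hx.1.le _) ?_
    exact Real.one_le_rpow_of_pos_of_le_one_of_nonpos (by linarith [hx.2]) (by linarith [hx.1])
      (by linarith)
  have hT : 0 < ∫ x in (0:ℝ)..1, bF p q x := by
    rw [bF_total hp (by linarith)]; exact ProbabilityTheory.beta_pos hp (by linarith)
  set T := ∫ x in (0:ℝ)..1, bF p q x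
  have hb := ProbabilityTheory.beta_pos hM hd
  have hGd := Real.Gamma_pos_of_pos hd
  have hGM := Real.Gamma_pos_of_pos hM
  have hGN := Real.Gamma_pos_of_pos (show 0 < p + q by linarith)
  have hg := gamma_bd hN hd hd1
  rw [Real.Gamma_add_one hM.ne'] at hg
  have h2 := (mul_le_mul_of_nonneg_right h1 hT.le).trans h
  rw [← div_le_iff₀ hb] at h2
  refine le_trans ?_ h2
  have e : ProbabilityTheory.beta (p + q - d) d
      = Real.Gamma (p + q - d) * Real.Gamma d / Real.Gamma (p + q) := by
    unfold ProbabilityTheory.beta; rw [sub_add_cancel]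
  have hu := Real.rpow_pos_of_pos hu0 (p + q - d)
  have e2 : u ^ (p + q - d) / (p + q - d) * T / ProbabilityTheory.beta (p + q - d) d
     = u ^ (p + q - d) / ((p + q - d) * ProbabilityTheory.beta (p + q - d) d) * T := by
    field_simp
  rw [e2]
  refine mul_le_mul_of_nonneg_right ?_ hT.le
  refine div_le_div_of_nonneg_left hu.le (mul_pos hM hb) ?_
  rw [e, ← mul_div_assoc, div_le_iff₀ hGN]
  nlinarith

lemma bF_refl (p q r : ℝ) :
    ∫ x in r..1, bF p q x = ∫ x in (0:ℝ)..(1 - r), bF q p x := by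
  have := intervalIntegral.integral_comp_sub_left (a := r) (b := 1) (bF q p) 1
  rw [sub_self] at this
  rw [← this]
  refine intervalIntegral.integral_congr fun x _ => ?_
  simp only [bF, sub_sub_cancel]
  ring

lemma dens_eq {a : ℝ} (ha : 0 < a) {t s : ℕ} (hs : s ≤ t) {x : ℝ} (h0 : 0 < x) (h1 : x ≤ 1) :
    x ^ s * (1 - x) ^ (t - s) * (x ^ (a - 1) * (1 - x) ^ (a - 1) / betaFn a a)
      = bF (a + s) (a + t - s) x / betaFn a a := by
  unfold bF
  have e1 : x ^ (a + s - 1) = x ^ s * x ^ (a - 1) := by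
    rw [← Real.rpow_natCast, ← Real.rpow_add h0]; ring_nf
  have e2 : (1 - x) ^ (a + t - s - 1) = (1 - x) ^ (t - s) * (1 - x) ^ (a - 1) := by
    obtain ⟨k, rfl⟩ := Nat.exists_eq_add_of_le hs
    rw [Nat.add_sub_cancel_left]
    push_cast
    rw [show a + (s + k) - s - 1 = (k : ℝ) + (a - 1) by ring]
    rcases Nat.eq_zero_or_pos k with rfl | hk
    · simp
    · have : (1 : ℝ) ≤ k := by exact_mod_cast hk
      rw [Real.rpow_add' (by linarith) (by linarith), Real.rpow_natCast]
  rw [e1, e2]; ring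

lemma Ioc_dens {a : ℝ} (ha : 0 < a) {t s : ℕ} (hs : s ≤ t) {l r : ℝ} (h0 : 0 ≤ l) (hlr : l ≤ r)
    (h1 : r ≤ 1) :
    ∫ x in Ioc l r, x ^ s * (1 - x) ^ (t - s) * (x ^ (a - 1) * (1 - x) ^ (a - 1) / betaFn a a)
      = (∫ x in l..r, bF (a + s) (a + t - s) x) / betaFn a a := by
  rw [intervalIntegral.integral_of_le hlr, ← integral_div]
  exact setIntegral_congr_fun measurableSet_Ioc fun x hx =>
    dens_eq ha hs (h0.trans_lt hx.1) (hx.2.trans h1)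

/-- for the Beta(a,a) prior, a lower bound on the optimal
conditional complementary coverage probability for every `t ≥ 1`. -/
theorem Copt_lower_bound_beta_prior (h : ℝ) (hh : 0 < h ∧ h < 1 / 2)
    (a : ℝ) (ha : 0 < a) :
    ∀ t : ℕ, 1 ≤ t → ∀ s : ℕ, s ≤ t →
      2 * (0.25 - h ^ 2) ^ deltaA a * (0.5 - h) ^ ((t : ℝ) + 2 * nA a) /
          (((t : ℝ) + 2 * nA a + 2 * deltaA a) * Real.Gamma (deltaA a))
        ≤ Copt h (fun θ => θ ^ (a - 1) * (1 - θ) ^ (a - 1) / betaFn a a) t s := by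
  intro t ht s hs
  obtain ⟨hh0, hh1⟩ := hh
  have key : 0 < deltaA a ∧ deltaA a ≤ 1 ∧ 0 ≤ nA a ∧ a = nA a + deltaA a := by
    unfold deltaA nA
    split_ifs with hc
    · refine ⟨one_pos, le_rfl, ?_, by ring⟩
      have : 0 < ⌊a⌋ := by rw [← hc] at ha; exact_mod_cast ha
      have : (1 : ℝ) ≤ ⌊a⌋ := by exact_mod_cast this
      linarith
    · have h1 := Int.floor_le a
      have h2 := Int.lt_floor_add_one a
      refine ⟨sub_pos.2 (lt_of_le_of_ne h1 hc), by linarith, ?_, by ring⟩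
      exact_mod_cast Int.floor_nonneg.2 ha.le
  obtain ⟨hd, hd1, hn, hadd⟩ := key
  set d := deltaA a
  set n := nA a
  have ht' : (1 : ℝ) ≤ t := by exact_mod_cast ht
  have hs' : (s : ℝ) ≤ t := by exact_mod_cast hs
  have hs0 : (0 : ℝ) ≤ s := s.cast_nonneg
  set p := a + s with hpdef
  set q := a + t - s with hqdef
  have hp : 0 < p := by linarith
  have hq : 0 < q := by linarith
  have hN : p + q = t + 2 * n + 2 * d := by rw [hpdef, hqdef]; linarith
  have hT : 0 < ∫ x in (0:ℝ)..1, bF p q x := by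
    rw [bF_total hp hq]; exact ProbabilityTheory.beta_pos hp hq
  have hbe : 0 < betaFn a a := by
    have := bF_total ha ha
    rw [intervalIntegral.integral_of_le zero_le_one] at this
    have e : betaFn a a = ProbabilityTheory.beta a a := this
    rw [e]; exact ProbabilityTheory.beta_pos ha ha
  have hGd := Real.Gamma_pos_of_pos hd
  unfold Copt
  rw [le_sub_comm]
  refine csSup_le ⟨_, mem_image_of_mem _ (left_mem_Icc.2 zero_le_one)⟩ ?_
  rintro _ ⟨c, ⟨hc0, hc1⟩, rfl⟩
  unfold covFn postDens margLik
  rw [integral_div]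
  set l := max (c - h) 0 with hl
  set r := min (c + h) 1 with hr
  have hl0 : 0 ≤ l := le_max_right _ _
  have hr1 : r ≤ 1 := min_le_right _ _
  have hl1 : l < 1 := max_lt (by linarith) one_pos
  have hr0 : 0 < r := lt_min (by linarith) one_pos
  have hlr : l ≤ r := max_le (le_min (by linarith) (by linarith)) hr0.le
  have hlen : r - l ≤ 2 * h := by
    have := min_le_left (c + h) 1
    have := le_max_left (c - h) 0
    linarith
  rw [Ioc_dens ha hs hl0 hlr hr1, Ioc_dens ha hs le_rfl zero_le_one le_rfl,
    div_div_div_cancel_right₀ hbe.ne', div_le_iff₀ hT]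
  have hsplit : (∫ x in (0:ℝ)..l, bF p q x) + (∫ x in l..r, bF p q x) + (∫ x in r..1, bF p q x)
      = ∫ x in (0:ℝ)..1, bF p q x := by
    rw [intervalIntegral.integral_add_adjacent_intervals (bF_ii hp hq le_rfl hl0 hl1.le)
      (bF_ii hp hq hl0 hlr hr1), intervalIntegral.integral_add_adjacent_intervals
      (bF_ii hp hq le_rfl hr0.le hr1) (bF_ii hp hq hr0.le hr1 le_rfl)]
  have t1 := tail (p := p) (q := q) hp hd hd1 (by linarith) (by linarith) hl0 hl1
  have t2 := tail (p := q) (q := p) (u := 1 - r) hq hd hd1 (by linarith) (by linarith)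
    (by linarith) (by linarith)
  rw [← bF_refl p q r] at t2
  have hTs : ∫ x in (0:ℝ)..1, bF q p x = ∫ x in (0:ℝ)..1, bF p q x := by
    have := bF_refl p q 0
    rw [sub_zero] at this; exact this.symm
  rw [hTs, add_comm q p] at t2
  set T := ∫ x in (0:ℝ)..1, bF p q x
  set M := p + q - d with hM
  have hM1 : 1 ≤ M := by linarith
  have hpow : 2 * (0.5 - h) ^ M ≤ l ^ M + (1 - r) ^ M := by
    have hj := (convexOn_rpow hM1).2 (x := l) (y := 1 - r) (mem_Ici.2 hl0)
      (mem_Ici.2 (by linarith)) (show (0:ℝ) ≤ 1/2 by norm_num) (show (0:ℝ) ≤ 1/2 by norm_num)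
      (by norm_num)
    simp only [smul_eq_mul] at hj
    have : ((0.5 : ℝ) - h) ^ M ≤ (1/2 * l + 1/2 * (1 - r)) ^ M :=
      Real.rpow_le_rpow (by norm_num; linarith) (by norm_num; linarith) (by linarith)
    linarith
  have hnum : 2 * (0.25 - h ^ 2) ^ d * (0.5 - h) ^ ((t : ℝ) + 2 * n) ≤ 2 * (0.5 - h) ^ M := by
    have hx : (0 : ℝ) < 0.5 - h := by norm_num; linarith
    rw [show M = d + ((t : ℝ) + 2 * n) by linarith, Real.rpow_add hx d, mul_assoc]
    have : ((0.25 : ℝ) - h ^ 2) ^ d ≤ (0.5 - h) ^ d :=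
      Real.rpow_le_rpow (by norm_num at *; nlinarith) (by norm_num at *; nlinarith) hd.le
    have := mul_le_mul_of_nonneg_right this (Real.rpow_nonneg hx.le ((t : ℝ) + 2 * n))
    linarith
  rw [← hN]
  have hD : 0 < (p + q) * Real.Gamma d := mul_pos (by linarith) hGd
  have hfin := mul_le_mul_of_nonneg_right (div_le_div_of_nonneg_right (hnum.trans hpow) hD.le) hT.le
  rw [add_div (l ^ M) ((1 - r) ^ M), add_mul (l ^ M / _)] at hfin
  change (∫ x in l..r, bF p q x) ≤ _
  linarith
end
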